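/- arXiv:1305.6492 — 5 statements merged into one kernel-verified Lean document; each statement's English description precedes it below -/
import Mathlib

section
/- Assume additionally that im(F^i) = ker(H^{i+1}) for all i ∈ ℤ/4, and suppose that for every i ∈ ℤ/4 the homomorphism W^i ⊕ W^{i+2} → h^{ε(i)}(K,⋆), (w, w') ↦ F̄^i(w) + F̄^{i+2}(w'), is an isomorphism, where ε(i) = + for i even and ε(i) = − for i odd. Then for every i ∈ ℤ/4 the homomorphism h^{ε(i+1)}(K,⋆) → ker(F^i) ⊕ ker(F^{i+2}), z ↦ (H̄^i(z), H̄^{i+2}(z)), is an isomorphism. -/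
/-! Tate cohomology of an abelian group with involution. -/

def kerP {M : Type*} [AddCommGroup M] (f : M →+ M) : AddSubgroup M :=
  (AddMonoidHom.id M - f).ker

def kerM {M : Type*} [AddCommGroup M] (f : M →+ M) : AddSubgroup M :=
  (AddMonoidHom.id M + f).ker

def imP {M : Type*} [AddCommGroup M] (f : M →+ M) : AddSubgroup M :=
  (AddMonoidHom.id M + f).range

def imM {M : Type*} [AddCommGroup M] (f : M →+ M) : AddSubgroup M :=
  (AddMonoidHom.id M - f).range

abbrev hPlus {M : Type*} [AddCommGroup M] (f : M →+ M) :=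
  kerP f ⧸ (imP f).addSubgroupOf (kerP f)

abbrev hMinus {M : Type*} [AddCommGroup M] (f : M →+ M) :=
  kerM f ⧸ (imM f).addSubgroupOf (kerM f)

def hPlusMk {M : Type*} [AddCommGroup M] (f : M →+ M) (x : M) (hx : x ∈ kerP f) :
    hPlus f := QuotientAddGroup.mk ⟨x, hx⟩

def hMinusMk {M : Type*} [AddCommGroup M] (f : M →+ M) (x : M) (hx : x ∈ kerM f) :
    hMinus f := QuotientAddGroup.mk ⟨x, hx⟩

theorem memP {K : Type*} [AddCommGroup K] (star : K →+ K) (x : K) :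
    x ∈ kerP star ↔ star x = x := by
  simp only [kerP, AddMonoidHom.mem_ker, AddMonoidHom.sub_apply, AddMonoidHom.id_apply]
  rw [sub_eq_zero, eq_comm]

theorem memM {K : Type*} [AddCommGroup K] (star : K →+ K) (x : K) :
    x ∈ kerM star ↔ star x = -x := by
  simp only [kerM, AddMonoidHom.mem_ker, AddMonoidHom.add_apply, AddMonoidHom.id_apply]
  rw [add_comm, add_eq_zero_iff_eq_neg]

theorem mkP_eq {K : Type*} [AddCommGroup K] (star : K →+ K) (x y : K) (hx hy) :
    hPlusMk star x hx = hPlusMk star y hy ↔ ∃ k, x - y = k + star k := by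
  unfold hPlusMk
  rw [QuotientAddGroup.eq_iff_sub_mem, AddSubgroup.mem_addSubgroupOf]
  simp [imP, eq_comm]

theorem mkM_eq {K : Type*} [AddCommGroup K] (star : K →+ K) (x y : K) (hx hy) :
    hMinusMk star x hx = hMinusMk star y hy ↔ ∃ k, x - y = k - star k := by
  unfold hMinusMk
  rw [QuotientAddGroup.eq_iff_sub_mem, AddSubgroup.mem_addSubgroupOf]
  simp [imM, eq_comm]

theorem extP {K : Type*} [AddCommGroup K] (star : K →+ K) {G : Type*} [AddCommGroup G]
    (F : G →+ K) (H : K →+ G) (hFH : ∀ x, F (H x) = x + star x)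
    (hsF : ∀ y, star (F y) = F y) :
    ∃ F1 : G ⧸ H.range →+ hPlus star, ∀ (y : G) (hy : F y ∈ kerP star),
      F1 (QuotientAddGroup.mk y) = hPlusMk star (F y) hy := by
  refine ⟨QuotientAddGroup.lift H.range ((QuotientAddGroup.mk' _).comp
    (F.codRestrict (kerP star) fun y => (memP star _).2 (hsF y))) ?_, fun y hy => rfl⟩
  rintro _ ⟨k, rfl⟩
  refine (mkP_eq star (F (H k)) 0 ((memP star _).2 (hsF _)) (zero_mem _)).2 ⟨k, ?_⟩
  simp [hFH]

theorem extM {K : Type*} [AddCommGroup K] (star : K →+ K) {G : Type*} [AddCommGroup G]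
    (F : G →+ K) (H : K →+ G) (hFH : ∀ x, F (H x) = x - star x)
    (hsF : ∀ y, star (F y) = -F y) :
    ∃ F1 : G ⧸ H.range →+ hMinus star, ∀ (y : G) (hy : F y ∈ kerM star),
      F1 (QuotientAddGroup.mk y) = hMinusMk star (F y) hy := by
  refine ⟨QuotientAddGroup.lift H.range ((QuotientAddGroup.mk' _).comp
    (F.codRestrict (kerM star) fun y => (memM star _).2 (hsF y))) ?_, fun y hy => rfl⟩
  rintro _ ⟨k, rfl⟩
  refine (mkM_eq star (F (H k)) 0 ((memM star _).2 (hsF _)) (zero_mem _)).2 ⟨k, ?_⟩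
  simp [hFH]

theorem elemP {K : Type*} [AddCommGroup K] (star : K →+ K) {G G' : Type*} [AddCommGroup G]
    [AddCommGroup G'] (F : G →+ K) (H : K →+ G) (F' : G' →+ K) (H' : K →+ G')
    (hFH : ∀ x, F (H x) = x + star x) (hsF : ∀ y, star (F y) = F y)
    (hFH' : ∀ x, F' (H' x) = x + star x) (hsF' : ∀ y, star (F' y) = F' y)
    (h : ∀ (F1 : G ⧸ H.range →+ hPlus star) (F2 : G' ⧸ H'.range →+ hPlus star),
        (∀ (y : G) (hy : F y ∈ kerP star),
            F1 (QuotientAddGroup.mk y) = hPlusMk star (F y) hy) →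
        (∀ (y : G') (hy : F' y ∈ kerP star),
            F2 (QuotientAddGroup.mk y) = hPlusMk star (F' y) hy) →
        Function.Bijective (fun p : (G ⧸ H.range) × (G' ⧸ H'.range) => F1 p.1 + F2 p.2)) :
    (∀ u v k, F u + F' v = F (H k) → u ∈ H.range ∧ v ∈ H'.range) ∧
    (∀ x, star x = x → ∃ u v, x = F u + F' v) := by
  obtain ⟨F1, h1⟩ := extP star F H hFH hsF
  obtain ⟨F2, h2⟩ := extP star F' H' hFH' hsF'
  obtain ⟨hi, hs⟩ := h F1 F2 h1 h2
  have m : ∀ y, F y ∈ kerP star := fun y => (memP star _).2 (hsF y)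
  have m' : ∀ y, F' y ∈ kerP star := fun y => (memP star _).2 (hsF' y)
  have key : ∀ u v, F1 (QuotientAddGroup.mk u) + F2 (QuotientAddGroup.mk v)
      = hPlusMk star (F u + F' v) (add_mem (m u) (m' v)) := by
    intro u v
    rw [h1 u (m u), h2 v (m' v)]; rfl
  constructor
  · intro u v k huv
    have := @hi (QuotientAddGroup.mk u, QuotientAddGroup.mk v) 0 (by
      simp only [Prod.fst_zero, Prod.snd_zero, map_zero, add_zero]
      rw [key]
      exact (mkP_eq star _ 0 _ (zero_mem _)).2 ⟨k, by rw [huv, hFH, sub_zero]⟩)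
    simpa [Prod.ext_iff, QuotientAddGroup.eq_zero_iff] using this
  · intro x hx
    obtain ⟨⟨p, q⟩, hpq⟩ := hs (hPlusMk star x ((memP star _).2 hx))
    obtain ⟨u, rfl⟩ := QuotientAddGroup.mk_surjective p
    obtain ⟨v, rfl⟩ := QuotientAddGroup.mk_surjective q
    simp only [key] at hpq
    obtain ⟨k, hk⟩ := (mkP_eq star _ _ _ _).1 hpq
    refine ⟨u - H k, v, ?_⟩
    rw [map_sub, hFH, ← hk]; abel

theorem elemM {K : Type*} [AddCommGroup K] (star : K →+ K) {G G' : Type*} [AddCommGroup G]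
    [AddCommGroup G'] (F : G →+ K) (H : K →+ G) (F' : G' →+ K) (H' : K →+ G')
    (hFH : ∀ x, F (H x) = x - star x) (hsF : ∀ y, star (F y) = -F y)
    (hFH' : ∀ x, F' (H' x) = x - star x) (hsF' : ∀ y, star (F' y) = -F' y)
    (h : ∀ (F1 : G ⧸ H.range →+ hMinus star) (F2 : G' ⧸ H'.range →+ hMinus star),
        (∀ (y : G) (hy : F y ∈ kerM star),
            F1 (QuotientAddGroup.mk y) = hMinusMk star (F y) hy) →
        (∀ (y : G') (hy : F' y ∈ kerM star),
            F2 (QuotientAddGroup.mk y) = hMinusMk star (F' y) hy) →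
        Function.Bijective (fun p : (G ⧸ H.range) × (G' ⧸ H'.range) => F1 p.1 + F2 p.2)) :
    (∀ u v k, F u + F' v = F (H k) → u ∈ H.range ∧ v ∈ H'.range) ∧
    (∀ x, star x = -x → ∃ u v, x = F u + F' v) := by
  obtain ⟨F1, h1⟩ := extM star F H hFH hsF
  obtain ⟨F2, h2⟩ := extM star F' H' hFH' hsF'
  obtain ⟨hi, hs⟩ := h F1 F2 h1 h2
  have m : ∀ y, F y ∈ kerM star := fun y => (memM star _).2 (hsF y)
  have m' : ∀ y, F' y ∈ kerM star := fun y => (memM star _).2 (hsF' y)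
  have key : ∀ u v, F1 (QuotientAddGroup.mk u) + F2 (QuotientAddGroup.mk v)
      = hMinusMk star (F u + F' v) (add_mem (m u) (m' v)) := by
    intro u v
    rw [h1 u (m u), h2 v (m' v)]; rfl
  constructor
  · intro u v k huv
    have := @hi (QuotientAddGroup.mk u, QuotientAddGroup.mk v) 0 (by
      simp only [Prod.fst_zero, Prod.snd_zero, map_zero, add_zero]
      rw [key]
      exact (mkM_eq star _ 0 _ (zero_mem _)).2 ⟨k, by rw [huv, hFH, sub_zero]⟩)
    simpa [Prod.ext_iff, QuotientAddGroup.eq_zero_iff] using this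
  · intro x hx
    obtain ⟨⟨p, q⟩, hpq⟩ := hs (hMinusMk star x ((memM star _).2 hx))
    obtain ⟨u, rfl⟩ := QuotientAddGroup.mk_surjective p
    obtain ⟨v, rfl⟩ := QuotientAddGroup.mk_surjective q
    simp only [key] at hpq
    obtain ⟨k, hk⟩ := (mkM_eq star _ _ _ _).1 hpq
    refine ⟨u - H k, v, ?_⟩
    rw [map_sub, hFH, ← hk]; abel

theorem coreHF {K : Type*} [AddCommGroup K] {A B C D : Type*} [AddCommGroup A] [AddCommGroup B]
    [AddCommGroup C] [AddCommGroup D] (star : K →+ K) (P : K → Prop) (T : K → K)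
    (hP : ∀ x y, P x → P y → P (x - y))
    (Fa : A →+ K) (Ha : K →+ A) (Fb : B →+ K) (Hb : K →+ B)
    (Fc : C →+ K) (Hc : K →+ C) (Fd : D →+ K) (Hd : K →+ D)
    (hab : Fa.range = Hb.ker) (hcd : Fc.range = Hd.ker)
    (haT : ∀ x, Fa (Ha x) = T x) (hPa : ∀ y, P (Fa y))
    (hb : ∀ x, Fb (Hb x) = 0 → P x) (hd : ∀ x, Fd (Hd x) = 0 → P x)
    (i1 : ∀ u v k, Fa u + Fc v = Fa (Ha k) → u ∈ Ha.range ∧ v ∈ Hc.range)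
    (s1 : ∀ x, P x → ∃ u v, x = Fa u + Fc v)
    (i2 : ∀ u v k, Fb u + Fd v = Fb (Hb k) → u ∈ Hb.range ∧ v ∈ Hd.range) :
    (∀ x, Hb x = 0 → Hd x = 0 → ∃ k, x = T k) ∧
    (∀ u v, Fb u = 0 → Fd v = 0 → ∃ x, P x ∧ Hb x = u ∧ Hd x = v) := by
  constructor
  · intro x h1 h2
    obtain ⟨a, rfl⟩ : x ∈ Fa.range := hab ▸ h1
    obtain ⟨c, hc⟩ : Fa a ∈ Fc.range := hcd ▸ h2
    obtain ⟨⟨k, rfl⟩, -⟩ := i1 a (-c) 0 (by simp [hc])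
    exact ⟨k, haT k⟩
  · intro u v hu hv
    obtain ⟨⟨a, rfl⟩, ⟨b, rfl⟩⟩ := i2 u v 0 (by simp [hu, hv])
    obtain ⟨p, q, hpq⟩ := s1 (a - b) (hP _ _ (hb a hu) (hd b hv))
    have e1 : Hb (Fa p) = 0 := by
      have : Fa p ∈ Hb.ker := hab ▸ ⟨p, rfl⟩
      exact this
    have e2 : Hd (Fc q) = 0 := by
      have : Fc q ∈ Hd.ker := hcd ▸ ⟨q, rfl⟩
      exact this
    refine ⟨a - Fa p, hP _ _ (hb a hu) (hPa p), by simp [e1], ?_⟩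
    have : a - Fa p = b + Fc q := by
      rw [sub_eq_iff_eq_add] at hpq ⊢
      rw [hpq]; abel
    rw [this, map_add, e2, add_zero]

theorem finP {K : Type*} [AddCommGroup K] (star : K →+ K) {B D : Type*} [AddCommGroup B]
    [AddCommGroup D] (Fb : B →+ K) (Hb : K →+ B) (Fd : D →+ K) (Hd : K →+ D)
    (h : (∀ x, Hb x = 0 → Hd x = 0 → ∃ k, x = k + star k) ∧
      (∀ u v, Fb u = 0 → Fd v = 0 → ∃ x, star x = x ∧ Hb x = u ∧ Hd x = v))
    (H1 : hPlus star →+ Fb.ker) (H2 : hPlus star →+ Fd.ker)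
    (h1 : ∀ (x : K) (hx : x ∈ kerP star), (H1 (hPlusMk star x hx) : B) = Hb x)
    (h2 : ∀ (x : K) (hx : x ∈ kerP star), (H2 (hPlusMk star x hx) : D) = Hd x) :
    Function.Bijective (fun z : hPlus star => (H1 z, H2 z)) := by
  constructor
  · refine (injective_iff_map_eq_zero (H1.prod H2)).2 ?_
    intro z hz
    obtain ⟨⟨x, hx⟩, rfl⟩ := QuotientAddGroup.mk_surjective z
    have hz1 : H1 (hPlusMk star x hx) = 0 := congrArg Prod.fst hz
    have hz2 : H2 (hPlusMk star x hx) = 0 := congrArg Prod.snd hz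
    obtain ⟨k, hk⟩ := h.1 x (by rw [← h1 x hx, hz1]; rfl) (by rw [← h2 x hx, hz2]; rfl)
    exact (mkP_eq star x 0 hx (zero_mem _)).2 ⟨k, by rw [sub_zero, hk.symm]⟩
  · rintro ⟨⟨u, hu⟩, ⟨v, hv⟩⟩
    obtain ⟨x, hx, e1, e2⟩ := h.2 u v hu hv
    have hx' := (memP star x).2 hx
    exact ⟨hPlusMk star x hx', Prod.ext (Subtype.ext ((h1 x hx').trans e1))
      (Subtype.ext ((h2 x hx').trans e2))⟩

theorem finM {K : Type*} [AddCommGroup K] (star : K →+ K) {B D : Type*} [AddCommGroup B]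
    [AddCommGroup D] (Fb : B →+ K) (Hb : K →+ B) (Fd : D →+ K) (Hd : K →+ D)
    (h : (∀ x, Hb x = 0 → Hd x = 0 → ∃ k, x = k - star k) ∧
      (∀ u v, Fb u = 0 → Fd v = 0 → ∃ x, star x = -x ∧ Hb x = u ∧ Hd x = v))
    (H1 : hMinus star →+ Fb.ker) (H2 : hMinus star →+ Fd.ker)
    (h1 : ∀ (x : K) (hx : x ∈ kerM star), (H1 (hMinusMk star x hx) : B) = Hb x)
    (h2 : ∀ (x : K) (hx : x ∈ kerM star), (H2 (hMinusMk star x hx) : D) = Hd x) :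
    Function.Bijective (fun z : hMinus star => (H1 z, H2 z)) := by
  constructor
  · refine (injective_iff_map_eq_zero (H1.prod H2)).2 ?_
    intro z hz
    obtain ⟨⟨x, hx⟩, rfl⟩ := QuotientAddGroup.mk_surjective z
    have hz1 : H1 (hMinusMk star x hx) = 0 := congrArg Prod.fst hz
    have hz2 : H2 (hMinusMk star x hx) = 0 := congrArg Prod.snd hz
    obtain ⟨k, hk⟩ := h.1 x (by rw [← h1 x hx, hz1]; rfl) (by rw [← h2 x hx, hz2]; rfl)
    exact (mkM_eq star x 0 hx (zero_mem _)).2 ⟨k, by rw [sub_zero, hk.symm]⟩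
  · rintro ⟨⟨u, hu⟩, ⟨v, hv⟩⟩
    obtain ⟨x, hx, e1, e2⟩ := h.2 u v hu hv
    have hx' := (memM star x).2 hx
    exact ⟨hMinusMk star x hx', Prod.ext (Subtype.ext ((h1 x hx').trans e1))
      (Subtype.ext ((h2 x hx').trans e2))⟩

/-- In the setting of the K-group with involution and the forgetful/hyperbolic
maps, assume additionally `im (F i) = ker (H (i+1))` for all `i ∈ ℤ/4`, and suppose that for
every `i` the induced map `W i ⊕ W (i+2) → h^{ε(i)}(K,⋆)`, `(w,w') ↦ F̄ i w + F̄ (i+2) w'`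
is an isomorphism (where `ε(i) = +` for `i` even and `−` for `i` odd).  Then for every `i`
the induced map `h^{ε(i+1)}(K,⋆) → ker (F i) ⊕ ker (F (i+2))`, `z ↦ (H̄ i z, H̄ (i+2) z)`,
is an isomorphism. -/
theorem statement1
    {K : Type*} [AddCommGroup K] (star : K →+ K) (hstar : ∀ x, star (star x) = x)
    (GW : ZMod 4 → Type*) [∀ i, AddCommGroup (GW i)]
    (F : ∀ i, GW i →+ K) (H : ∀ i, K →+ GW i)
    (hH : ∀ i (x : K), H i (star x) = ((-1 : ℤ) ^ i.val) • H i x)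
    (hFH : ∀ i (x : K), F i (H i x) = x + ((-1 : ℤ) ^ i.val) • star x)
    (hsF : ∀ i (y : GW i), star (F i y) = ((-1 : ℤ) ^ i.val) • F i y)
    (hrange : ∀ i, (F i).range = (H (i + 1)).ker)
    -- hypothesis: `(F̄ i, F̄ (i+2)) : W i ⊕ W (i+2) → h^{ε(i)}(K,⋆)` is an isomorphism
    (hFisoEven : ∀ i : ZMod 4, Even i.val →
      ∀ (F1 : GW i ⧸ (H i).range →+ hPlus star)
        (F2 : GW (i + 2) ⧸ (H (i + 2)).range →+ hPlus star),
        (∀ (y : GW i) (hy : F i y ∈ kerP star),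
            F1 (QuotientAddGroup.mk y) = hPlusMk star (F i y) hy) →
        (∀ (y : GW (i + 2)) (hy : F (i + 2) y ∈ kerP star),
            F2 (QuotientAddGroup.mk y) = hPlusMk star (F (i + 2) y) hy) →
        Function.Bijective
          (fun p : (GW i ⧸ (H i).range) × (GW (i + 2) ⧸ (H (i + 2)).range) =>
            F1 p.1 + F2 p.2))
    (hFisoOdd : ∀ i : ZMod 4, Odd i.val →
      ∀ (F1 : GW i ⧸ (H i).range →+ hMinus star)
        (F2 : GW (i + 2) ⧸ (H (i + 2)).range →+ hMinus star),
        (∀ (y : GW i) (hy : F i y ∈ kerM star),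
            F1 (QuotientAddGroup.mk y) = hMinusMk star (F i y) hy) →
        (∀ (y : GW (i + 2)) (hy : F (i + 2) y ∈ kerM star),
            F2 (QuotientAddGroup.mk y) = hMinusMk star (F (i + 2) y) hy) →
        Function.Bijective
          (fun p : (GW i ⧸ (H i).range) × (GW (i + 2) ⧸ (H (i + 2)).range) =>
            F1 p.1 + F2 p.2)) :
    -- conclusion: `(H̄ i, H̄ (i+2)) : h^{ε(i+1)}(K,⋆) → ker (F i) ⊕ ker (F (i+2))`
    -- is an isomorphism
    (∀ i : ZMod 4, Even i.val →
      ∀ (H1 : hMinus star →+ (F i).ker) (H2 : hMinus star →+ (F (i + 2)).ker),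
        (∀ (x : K) (hx : x ∈ kerM star), ((H1 (hMinusMk star x hx) : GW i) = H i x)) →
        (∀ (x : K) (hx : x ∈ kerM star),
            ((H2 (hMinusMk star x hx) : GW (i + 2)) = H (i + 2) x)) →
        Function.Bijective (fun z : hMinus star => (H1 z, H2 z))) ∧
    (∀ i : ZMod 4, Odd i.val →
      ∀ (H1 : hPlus star →+ (F i).ker) (H2 : hPlus star →+ (F (i + 2)).ker),
        (∀ (x : K) (hx : x ∈ kerP star), ((H1 (hPlusMk star x hx) : GW i) = H i x)) →
        (∀ (x : K) (hx : x ∈ kerP star),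
            ((H2 (hPlusMk star x hx) : GW (i + 2)) = H (i + 2) x)) →
        Function.Bijective (fun z : hPlus star => (H1 z, H2 z))) := by
  have hr : ∀ i j : ZMod 4, j = i + 1 → (F i).range = (H j).ker := by
    rintro i _ rfl; exact hrange i
  have p1 : ∀ i : ZMod 4, Even i.val → Even (i + 2).val ∧ Odd (i + 3).val ∧
      Odd (i + 3 + 2).val := by decide
  have p2 : ∀ i : ZMod 4, Odd i.val → Odd (i + 2).val ∧ Even (i + 3).val ∧
      Even (i + 3 + 2).val := by decide
  have q : ∀ i : ZMod 4, i = i + 3 + 1 ∧ i + 2 = i + 3 + 2 + 1 := by decide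
  have hFHe : ∀ i : ZMod 4, Even i.val → ∀ x, F i (H i x) = x + star x := by
    intro i hi x; rw [hFH, hi.neg_one_pow, one_smul]
  have hFHo : ∀ i : ZMod 4, Odd i.val → ∀ x, F i (H i x) = x - star x := by
    intro i hi x; rw [hFH, hi.neg_one_pow, neg_one_smul, sub_eq_add_neg]
  have hsFe : ∀ i : ZMod 4, Even i.val → ∀ y, star (F i y) = F i y := by
    intro i hi x; rw [hsF, hi.neg_one_pow, one_smul]
  have hsFo : ∀ i : ZMod 4, Odd i.val → ∀ y, star (F i y) = -F i y := by
    intro i hi x; rw [hsF, hi.neg_one_pow, neg_one_smul]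
  have he := fun (i : ZMod 4) (hi : Even i.val) =>
    elemP star (F i) (H i) (F (i + 2)) (H (i + 2)) (hFHe _ hi) (hsFe _ hi)
      (hFHe _ (p1 i hi).1) (hsFe _ (p1 i hi).1) (hFisoEven i hi)
  have ho := fun (i : ZMod 4) (hi : Odd i.val) =>
    elemM star (F i) (H i) (F (i + 2)) (H (i + 2)) (hFHo _ hi) (hsFo _ hi)
      (hFHo _ (p2 i hi).1) (hsFo _ (p2 i hi).1) (hFisoOdd i hi)
  constructor
  · intro i hi H1 H2 h1 h2
    obtain ⟨a, b, c⟩ := p1 i hi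
    refine finM star _ (H i) _ (H (i + 2)) ?_ H1 H2 h1 h2
    refine coreHF star (fun x => star x = -x) (fun k => k - star k) ?_
      (F (i + 3)) (H (i + 3)) (F i) (H i) (F (i + 3 + 2)) (H (i + 3 + 2)) (F (i + 2)) (H (i + 2))
      (hr _ _ (q i).1) (hr _ _ (q i).2) (hFHo _ b) (hsFo _ b) ?_ ?_
      (ho _ b).1 (ho _ b).2 (he i hi).1
    · intro x y hx hy
      simp only [map_sub, hx, hy]; abel
    · intro x hx
      rw [hFHe i hi] at hx
      exact eq_neg_of_add_eq_zero_right hx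
    · intro x hx
      rw [hFHe _ a] at hx
      exact eq_neg_of_add_eq_zero_right hx
  · intro i hi H1 H2 h1 h2
    obtain ⟨a, b, c⟩ := p2 i hi
    refine finP star _ (H i) _ (H (i + 2)) ?_ H1 H2 h1 h2
    refine coreHF star (fun x => star x = x) (fun k => k + star k) ?_
      (F (i + 3)) (H (i + 3)) (F i) (H i) (F (i + 3 + 2)) (H (i + 3 + 2)) (F (i + 2)) (H (i + 2))
      (hr _ _ (q i).1) (hr _ _ (q i).2) (hFHe _ b) (hsFe _ b) ?_ ?_
      (he _ b).1 (he _ b).2 (ho i hi).1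
    · intro x y hx hy
      simp only [map_sub, hx, hy]
    · intro x hx
      rw [hFHo i hi] at hx
      exact (sub_eq_zero.1 hx).symm
    · intro x hx
      rw [hFHo _ a] at hx
      exact (sub_eq_zero.1 hx).symm
end

section
/- Let 0 → M' →ι M →p M'' → 0 be a short exact sequence of abelian groups equipped with additive involutions ⋆, such that ι and p commute with the involutions. Then: (1) for every m ∈ M with p(m)⋆ = p(m) there is a unique m' ∈ M' with ι(m') = m − m⋆; this m' satisfies m'⋆ = −m', and its class in h⁻(M',⋆) depends only on the class of p(m) in h⁺(M'',⋆), giving a well-defined homomorphism ∂ : h⁺(M'',⋆) → h⁻(M',⋆); symmetrically, m ↦ m + m⋆ gives a well-defined homomorphism ∂ : h⁻(M'',⋆) → h⁺(M',⋆). (2) The resulting six-term sequence h⁺(M') → h⁺(M) → h⁺(M'') →∂ h⁻(M') → h⁻(M) → h⁻(M'') →∂ h⁺(M'), in which the first two maps of each triple are induced by ι and p, is exact at every term. -/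
namespace TateAux

abbrev HH {M : Type*} [AddCommGroup M] (A B : M →+ M) :=
  A.ker ⧸ B.range.addSubgroupOf A.ker

def hm {M : Type*} [AddCommGroup M] (A B : M →+ M) (x : M) (hx : x ∈ A.ker) : HH A B :=
  QuotientAddGroup.mk ⟨x, hx⟩

theorem hm_surj {M : Type*} [AddCommGroup M] {A B : M →+ M} (z : HH A B) :
    ∃ x hx, z = hm A B x hx := by
  obtain ⟨⟨x, hx⟩, rfl⟩ := QuotientAddGroup.mk_surjective z
  exact ⟨x, hx, rfl⟩

theorem hm_eq {M : Type*} [AddCommGroup M] {A B : M →+ M} {x y : M} {hx : x ∈ A.ker}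
    {hy : y ∈ A.ker} : hm A B x hx = hm A B y hy ↔ ∃ n, B n = y - x := by
  unfold hm
  rw [QuotientAddGroup.eq, AddSubgroup.mem_addSubgroupOf, AddMonoidHom.mem_range]
  simp [sub_eq_neg_add]

theorem hm_zero {M : Type*} [AddCommGroup M] {A B : M →+ M} {x : M} {hx : x ∈ A.ker} :
    hm A B x hx = 0 ↔ ∃ n, B n = x := by
  unfold hm
  rw [QuotientAddGroup.eq_zero_iff, AddSubgroup.mem_addSubgroupOf, AddMonoidHom.mem_range]

/-- Homs out of `HH` from a relation. -/
theorem exists_hom {M N : Type*} [AddCommGroup M] [AddCommGroup N] (A B : M →+ M) (C D : N →+ N)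
    (R : M → N → Prop) (hex : ∀ x, x ∈ A.ker → ∃ y, y ∈ C.ker ∧ R x y)
    (hadd : ∀ x y x' y', R x y → R x' y' → R (x + x') (y + y'))
    (hneg : ∀ x y, R x y → R (-x) (-y))
    (hind : ∀ x y, R x y → (∃ n, B n = x) → ∃ n, D n = y) :
    ∃ g : HH A B →+ HH C D, ∀ x hx y hy, R x y → g (hm A B x hx) = hm C D y hy := by
  choose F hF hR using hex
  have key : ∀ x y y', R x y → R x y' → ∃ n, D n = y' - y := by
    intro x y y' h h'
    refine hind 0 _ ?_ ⟨0, map_zero _⟩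
    have := hadd _ _ _ _ h' (hneg _ _ h)
    rwa [add_neg_cancel, ← sub_eq_add_neg] at this
  let g0 : A.ker →+ HH C D := AddMonoidHom.mk' (fun x => hm C D (F x.1 x.2) (hF _ _)) (by
    intro a b
    change hm C D _ _ = hm C D (F a.1 a.2 + F b.1 b.2) (add_mem (hF _ _) (hF _ _))
    rw [hm_eq]
    exact key _ _ _ (hR _ _) (hadd _ _ _ _ (hR _ _) (hR _ _)))
  refine ⟨QuotientAddGroup.lift _ g0 ?_, ?_⟩
  · intro x hx
    rw [AddSubgroup.mem_addSubgroupOf, AddMonoidHom.mem_range] at hx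
    exact hm_zero.2 (hind _ _ (hR _ _) hx)
  · intro x hx y hy h
    change hm C D (F x hx) _ = _
    exact hm_eq.2 (key _ _ _ (hR _ _) h)

section
variable {M' M M'' : Type*} [AddCommGroup M'] [AddCommGroup M] [AddCommGroup M'']
    {A' B' : M' →+ M'} {A B : M →+ M} {A'' B'' : M'' →+ M''} {ι : M' →+ M} {p : M →+ M''}

theorem induced {f : M →+ M''} (hA : ∀ x, f (A x) = A'' (f x)) (hB : ∀ x, f (B x) = B'' (f x)) :
    ∃ g : HH A B →+ HH A'' B'', ∀ x hx hx', g (hm A B x hx) = hm A'' B'' (f x) hx' := by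
  obtain ⟨g, hg⟩ := exists_hom A B A'' B'' (fun x y => f x = y)
    (fun x hx => ⟨f x, by
      rw [AddMonoidHom.mem_ker] at hx ⊢
      rw [← hA, hx, map_zero], rfl⟩)
    (by rintro x _ x' _ rfl rfl; exact map_add _ _ _)
    (by rintro x _ rfl; exact map_neg _ _)
    (by rintro _ _ rfl ⟨n, rfl⟩; exact ⟨f n, (hB n).symm⟩)
  exact ⟨g, fun x hx hx' => hg x hx _ hx' rfl⟩

theorem connecting (hinj : Function.Injective ι) (hsurj : Function.Surjective p)
    (hexact : ι.range = p.ker) (hAB : ∀ x, A (B x) = 0) (hBA : ∀ x, B (A x) = 0)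
    (iA : ∀ x, ι (A' x) = A (ι x)) (iB : ∀ x, ι (B' x) = B (ι x))
    (pA : ∀ x, p (A x) = A'' (p x)) (pB : ∀ x, p (B x) = B'' (p x)) :
    ∃ d : HH A'' B'' →+ HH B' A', ∀ m h m' h', ι m' = A m →
      d (hm A'' B'' (p m) h) = hm B' A' m' h' := by
  have ex : ∀ m, p m = 0 → ∃ k, ι k = m := fun m h => by
    have : m ∈ p.ker := h
    rwa [← hexact] at this
  obtain ⟨g, hg⟩ := exists_hom A'' B'' B' A' (fun x y => ∃ m, p m = x ∧ ι y = A m)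
    (by
      intro x hx
      obtain ⟨m, rfl⟩ := hsurj x
      obtain ⟨k, hk⟩ := ex (A m) (by rw [pA]; exact hx)
      refine ⟨k, hinj ?_, m, rfl, hk⟩
      rw [iB, hk, hBA, map_zero])
    (by
      rintro _ y _ y' ⟨m, rfl, h⟩ ⟨m', rfl, h'⟩
      exact ⟨m + m', map_add _ _ _, by rw [map_add, map_add, h, h']⟩)
    (by
      rintro _ y ⟨m, rfl, h⟩
      exact ⟨-m, map_neg _ _, by rw [map_neg, map_neg, h]⟩)
    (by
      rintro _ y ⟨m, rfl, h⟩ ⟨n, hn⟩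
      obtain ⟨n, rfl⟩ := hsurj n
      obtain ⟨k, hk⟩ := ex (m - B n) (by rw [map_sub, pB, hn, sub_self])
      exact ⟨k, hinj (by rw [iA, hk, map_sub, hAB, sub_zero, h])⟩)
  exact ⟨g, fun m h m' h' e => hg _ _ _ _ ⟨m, rfl, e⟩⟩

theorem exact1 (hinj : Function.Injective ι) (hsurj : Function.Surjective p)
    (hexact : ι.range = p.ker) (hAB : ∀ x, A (B x) = 0)
    (iA : ∀ x, ι (A' x) = A (ι x))
    (pA : ∀ x, p (A x) = A'' (p x)) (pB : ∀ x, p (B x) = B'' (p x))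
    (i : HH A' B' →+ HH A B) (q : HH A B →+ HH A'' B'')
    (hi : ∀ x hx hx', i (hm A' B' x hx) = hm A B (ι x) hx')
    (hq : ∀ x hx hx', q (hm A B x hx) = hm A'' B'' (p x) hx') : i.range = q.ker := by
  have ex : ∀ m, p m = 0 ↔ ∃ k, ι k = m := fun m => by
    rw [← AddMonoidHom.mem_ker, ← hexact, AddMonoidHom.mem_range]
  ext z
  rw [AddMonoidHom.mem_range, AddMonoidHom.mem_ker]
  constructor
  · rintro ⟨w, rfl⟩
    obtain ⟨x, hx, rfl⟩ := hm_surj w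
    have h1 : ι x ∈ A.ker := by
      rw [AddMonoidHom.mem_ker] at hx ⊢
      rw [← iA, hx, map_zero]
    have h0 : p (ι x) = 0 := (ex _).2 ⟨x, rfl⟩
    rw [hi x hx h1, hq _ h1 (by rw [h0]; exact zero_mem _), hm_zero]
    exact ⟨0, by rw [h0, map_zero]⟩
  · intro hz
    obtain ⟨x, hx, rfl⟩ := hm_surj z
    have h1 : p x ∈ A''.ker := by
      rw [AddMonoidHom.mem_ker] at hx ⊢
      rw [← pA, hx, map_zero]
    rw [hq x hx h1, hm_zero] at hz
    obtain ⟨n, hn⟩ := hz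
    obtain ⟨n, rfl⟩ := hsurj n
    obtain ⟨k, hk⟩ := (ex (x - B n)).1 (by rw [map_sub, pB, hn, sub_self])
    have h2 : ι k ∈ A.ker := by
      rw [AddMonoidHom.mem_ker, hk, map_sub, hAB, AddMonoidHom.mem_ker.1 hx, sub_zero]
    have h3 : k ∈ A'.ker := hinj (by rw [iA, AddMonoidHom.mem_ker.1 h2, map_zero])
    refine ⟨hm A' B' k h3, ?_⟩
    rw [hi k h3 h2, hm_eq]
    exact ⟨n, by rw [hk]; abel⟩

theorem exact2 (hsurj : Function.Surjective p)
    (hexact : ι.range = p.ker) (hinj : Function.Injective ι) (hBA : ∀ x, B (A x) = 0)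
    (iA : ∀ x, ι (A' x) = A (ι x)) (iB : ∀ x, ι (B' x) = B (ι x))
    (pA : ∀ x, p (A x) = A'' (p x))
    (q : HH A B →+ HH A'' B'') (d : HH A'' B'' →+ HH B' A')
    (hq : ∀ x hx hx', q (hm A B x hx) = hm A'' B'' (p x) hx')
    (hd : ∀ m h m' h', ι m' = A m → d (hm A'' B'' (p m) h) = hm B' A' m' h') :
    q.range = d.ker := by
  have ex : ∀ m, p m = 0 ↔ ∃ k, ι k = m := fun m => by
    rw [← AddMonoidHom.mem_ker, ← hexact, AddMonoidHom.mem_range]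
  ext z
  rw [AddMonoidHom.mem_range, AddMonoidHom.mem_ker]
  constructor
  · rintro ⟨w, rfl⟩
    obtain ⟨x, hx, rfl⟩ := hm_surj w
    have h1 : p x ∈ A''.ker := by
      rw [AddMonoidHom.mem_ker] at hx ⊢
      rw [← pA, hx, map_zero]
    rw [hq x hx h1, hd x h1 0 (zero_mem _) (by rw [map_zero, AddMonoidHom.mem_ker.1 hx]), hm_zero]
    exact ⟨0, map_zero _⟩
  · intro hz
    obtain ⟨x, hx, rfl⟩ := hm_surj z
    obtain ⟨m, rfl⟩ := hsurj x
    obtain ⟨k, hk⟩ := (ex (A m)).1 (by rw [pA]; exact hx)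
    have hkB : k ∈ B'.ker := hinj (by rw [iB, hk, hBA, map_zero])
    rw [hd m hx k hkB hk, hm_zero] at hz
    obtain ⟨n, rfl⟩ := hz
    have h0 : p (ι n) = 0 := (ex _).2 ⟨n, rfl⟩
    have h2 : p (m - ι n) = p m := by rw [map_sub, h0, sub_zero]
    have h3 : m - ι n ∈ A.ker := by rw [AddMonoidHom.mem_ker, map_sub, ← hk, iA, sub_self]
    refine ⟨hm A B (m - ι n) h3, ?_⟩
    rw [hq _ h3 (by rw [h2]; exact hx), hm_eq]
    exact ⟨0, by rw [h2, map_zero, sub_self]⟩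

theorem exact3 (hsurj : Function.Surjective p)
    (hexact : ι.range = p.ker) (hinj : Function.Injective ι) (hBA : ∀ x, B (A x) = 0)
    (iB : ∀ x, ι (B' x) = B (ι x))
    (pA : ∀ x, p (A x) = A'' (p x))
    (d : HH A'' B'' →+ HH B' A') (i : HH B' A' →+ HH B A)
    (hd : ∀ m h m' h', ι m' = A m → d (hm A'' B'' (p m) h) = hm B' A' m' h')
    (hi : ∀ x hx hx', i (hm B' A' x hx) = hm B A (ι x) hx') :
    d.range = i.ker := by
  have ex : ∀ m, p m = 0 ↔ ∃ k, ι k = m := fun m => by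
    rw [← AddMonoidHom.mem_ker, ← hexact, AddMonoidHom.mem_range]
  ext z
  rw [AddMonoidHom.mem_range, AddMonoidHom.mem_ker]
  constructor
  · rintro ⟨w, rfl⟩
    obtain ⟨x, hx, rfl⟩ := hm_surj w
    obtain ⟨m, rfl⟩ := hsurj x
    obtain ⟨k, hk⟩ := (ex (A m)).1 (by rw [pA]; exact hx)
    have hkB : k ∈ B'.ker := hinj (by rw [iB, hk, hBA, map_zero])
    rw [hd m hx k hkB hk, hi k hkB (by rw [hk]; exact hBA m), hm_zero]
    exact ⟨m, hk.symm⟩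
  · intro hz
    obtain ⟨x, hx, rfl⟩ := hm_surj z
    have h1 : ι x ∈ B.ker := by
      rw [AddMonoidHom.mem_ker] at hx ⊢
      rw [← iB, hx, map_zero]
    rw [hi x hx h1, hm_zero] at hz
    obtain ⟨m, hmm⟩ := hz
    have h2 : p m ∈ A''.ker := by
      rw [AddMonoidHom.mem_ker, ← pA, hmm]
      exact (ex _).2 ⟨x, rfl⟩
    exact ⟨hm A'' B'' (p m) h2, hd m h2 x hx hmm.symm⟩

end

end TateAux

/-- Let `0 → M' →ι M →p M'' → 0` be a short exact sequence of abelian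
groups with additive involutions, `ι` and `p` commuting with the involutions.  Then:
(1) for every `m ∈ M` with `p m` self-dual there is a unique `m' ∈ M'` with
`ι m' = m - m⋆`; it is anti-self-dual, and `[p m] ↦ [m']` is a well-defined boundary map
`∂ : h⁺(M'') →+ h⁻(M')`; symmetrically `m ↦ m + m⋆` yields `∂ : h⁻(M'') →+ h⁺(M')`.
(2) The six-term sequence
`h⁺(M') → h⁺(M) → h⁺(M'') →∂ h⁻(M') → h⁻(M) → h⁻(M'') →∂ h⁺(M')` is exact everywhere. -/
theorem statement3
    {M' M M'' : Type*} [AddCommGroup M'] [AddCommGroup M] [AddCommGroup M'']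
    (τ' : M' →+ M') (τ : M →+ M) (τ'' : M'' →+ M'')
    (hτ' : ∀ x, τ' (τ' x) = x) (hτ : ∀ x, τ (τ x) = x) (hτ'' : ∀ x, τ'' (τ'' x) = x)
    (ι : M' →+ M) (p : M →+ M'')
    (hinj : Function.Injective ι) (hsurj : Function.Surjective p)
    (hexact : ι.range = p.ker)
    (hcι : ∀ x, ι (τ' x) = τ (ι x)) (hcp : ∀ x, p (τ x) = τ'' (p x)) :
    -- (1) existence, uniqueness and anti-self-duality of the lift `m'`
    (∀ m : M, τ'' (p m) = p m →
      (∃! m' : M', ι m' = m - τ m) ∧ (∀ m' : M', ι m' = m - τ m → τ' m' = -m')) ∧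
    (∀ m : M, τ'' (p m) = -(p m) →
      (∃! m' : M', ι m' = m + τ m) ∧ (∀ m' : M', ι m' = m + τ m → τ' m' = m')) ∧
    -- well-defined induced maps and boundary maps, and (2) exactness of the six-term sequence
    ∃ (iP : hPlus τ' →+ hPlus τ) (pP : hPlus τ →+ hPlus τ'') (dP : hPlus τ'' →+ hMinus τ')
      (iM : hMinus τ' →+ hMinus τ) (pM : hMinus τ →+ hMinus τ'')
      (dM : hMinus τ'' →+ hPlus τ'),
      (∀ (x : M') (hx : x ∈ kerP τ') (hx' : ι x ∈ kerP τ),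
          iP (hPlusMk τ' x hx) = hPlusMk τ (ι x) hx') ∧
      (∀ (x : M) (hx : x ∈ kerP τ) (hx' : p x ∈ kerP τ''),
          pP (hPlusMk τ x hx) = hPlusMk τ'' (p x) hx') ∧
      (∀ (m : M) (h : p m ∈ kerP τ'') (m' : M') (hm' : ι m' = m - τ m)
          (h' : m' ∈ kerM τ'),
          dP (hPlusMk τ'' (p m) h) = hMinusMk τ' m' h') ∧
      (∀ (x : M') (hx : x ∈ kerM τ') (hx' : ι x ∈ kerM τ),
          iM (hMinusMk τ' x hx) = hMinusMk τ (ι x) hx') ∧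
      (∀ (x : M) (hx : x ∈ kerM τ) (hx' : p x ∈ kerM τ''),
          pM (hMinusMk τ x hx) = hMinusMk τ'' (p x) hx') ∧
      (∀ (m : M) (h : p m ∈ kerM τ'') (m' : M') (hm' : ι m' = m + τ m)
          (h' : m' ∈ kerP τ'),
          dM (hMinusMk τ'' (p m) h) = hPlusMk τ' m' h') ∧
      iP.range = pP.ker ∧ pP.range = dP.ker ∧ dP.range = iM.ker ∧
      iM.range = pM.ker ∧ pM.range = dM.ker ∧ dM.range = iP.ker := by
  have ex : ∀ m, p m = 0 → ∃ k, ι k = m := fun m h => by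
    have : m ∈ p.ker := h
    rwa [← hexact] at this
  have iA : ∀ x, ι ((AddMonoidHom.id M' - τ') x) = (AddMonoidHom.id M - τ) (ι x) := by
    intro x; simp [hcι]
  have iB : ∀ x, ι ((AddMonoidHom.id M' + τ') x) = (AddMonoidHom.id M + τ) (ι x) := by
    intro x; simp [hcι]
  have pA : ∀ x, p ((AddMonoidHom.id M - τ) x) = (AddMonoidHom.id M'' - τ'') (p x) := by
    intro x; simp [hcp]
  have pB : ∀ x, p ((AddMonoidHom.id M + τ) x) = (AddMonoidHom.id M'' + τ'') (p x) := by
    intro x; simp [hcp]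
  have hAB : ∀ x, (AddMonoidHom.id M - τ) ((AddMonoidHom.id M + τ) x) = 0 := by
    intro x; simp [hτ]; abel
  have hBA : ∀ x, (AddMonoidHom.id M + τ) ((AddMonoidHom.id M - τ) x) = 0 := by
    intro x; simp [hτ]
  refine ⟨?_, ?_, ?_⟩
  · intro m h
    constructor
    · obtain ⟨k, hk⟩ := ex (m - τ m) (by rw [map_sub, hcp, h, sub_self])
      exact ⟨k, hk, fun y hy => hinj (hy.trans hk.symm)⟩
    · intro k hk
      apply hinj
      rw [hcι, map_neg, hk, map_sub, hτ, neg_sub]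
  · intro m h
    constructor
    · obtain ⟨k, hk⟩ := ex (m + τ m) (by rw [map_add, hcp, h, add_neg_cancel])
      exact ⟨k, hk, fun y hy => hinj (hy.trans hk.symm)⟩
    · intro k hk
      apply hinj
      rw [hcι, hk, map_add, hτ, add_comm]
  · obtain ⟨iP, hiP⟩ := TateAux.induced iA iB
    obtain ⟨pP, hpP⟩ := TateAux.induced pA pB
    obtain ⟨iM, hiM⟩ := TateAux.induced iB iA
    obtain ⟨pM, hpM⟩ := TateAux.induced pB pA
    obtain ⟨dP, hdP⟩ := TateAux.connecting hinj hsurj hexact hAB hBA iA iB pA pB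
    obtain ⟨dM, hdM⟩ := TateAux.connecting hinj hsurj hexact hBA hAB iB iA pB pA
    exact ⟨iP, pP, dP, iM, pM, dM, hiP, hpP, fun m h m' e h' => hdP m h m' h' e, hiM, hpM,
      fun m h m' e h' => hdM m h m' h' e,
      TateAux.exact1 hinj hsurj hexact hAB iA pA pB iP pP hiP hpP,
      TateAux.exact2 hsurj hexact hinj hBA iA iB pA pP dP hpP hdP,
      TateAux.exact3 hsurj hexact hinj hBA iB pA dP iM hdP hiM,
      TateAux.exact1 hinj hsurj hexact hBA iB pB pA iM pM hiM hpM,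
      TateAux.exact2 hsurj hexact hinj hAB iB iA pB pM dM hpM hdM,
      TateAux.exact3 hsurj hexact hinj hAB iA pB dM iP hdM hiP⟩
end

section
/- Let M and N be abelian groups with additive involutions ⋆, and equip M ⊗_ℤ N with the involution determined by (m ⊗ n)⋆ = m⋆ ⊗ n⋆. The assignment ([m],[n]) ↦ [m ⊗ n] induces well-defined homomorphisms h^{ε}(M,⋆) ⊗ h^{ε'}(N,⋆) → h^{εε'}(M ⊗_ℤ N, ⋆) for all signs ε, ε' ∈ {+1,−1}. If M or N is free as an abelian group, then the resulting canonical maps (h⁺(M) ⊗ h⁺(N)) ⊕ (h⁻(M) ⊗ h⁻(N)) → h⁺(M ⊗_ℤ N) and (h⁺(M) ⊗ h⁻(N)) ⊕ (h⁻(M) ⊗ h⁺(N)) → h⁻(M ⊗_ℤ N) are isomorphisms. -/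
/-- The involution on `M ⊗ N` determined by `(m ⊗ n)⋆ = m⋆ ⊗ n⋆`. -/
noncomputable def tensorInv {M N : Type*} [AddCommGroup M] [AddCommGroup N]
    (τM : M →+ M) (τN : N →+ N) :
    TensorProduct ℤ M N →+ TensorProduct ℤ M N :=
  (TensorProduct.map τM.toIntLinearMap τN.toIntLinearMap).toAddMonoidHom

section
open TensorProduct LinearMap

def inc {M : Type*} [AddCommGroup M] (f : M →+ M) : kerP f →ₗ[ℤ] M :=
  (kerP f).subtype.toIntLinearMap

def qt {M : Type*} [AddCommGroup M] (f : M →+ M) : kerP f →ₗ[ℤ] hPlus f :=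
  (QuotientAddGroup.mk' ((imP f).addSubgroupOf (kerP f))).toIntLinearMap

theorem mem_kerP {M : Type*} [AddCommGroup M] {f : M →+ M} {x : M} : x ∈ kerP f ↔ f x = x := by
  rw [kerP, AddMonoidHom.mem_ker]; exact sub_eq_zero.trans eq_comm

theorem mem_imP {M : Type*} [AddCommGroup M] {f : M →+ M} {x : M} :
    x ∈ imP f ↔ ∃ y, y + f y = x := by
  simp [imP, AddMonoidHom.mem_range]

def nrm {M : Type*} [AddCommGroup M] (f : M →+ M) (hf : ∀ x, f (f x) = x) : M →ₗ[ℤ] kerP f :=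
  ((AddMonoidHom.id M + f).codRestrict (kerP f) (fun x => by
    rw [mem_kerP]; simp [hf, add_comm])).toIntLinearMap

section
variable {M : Type*} [AddCommGroup M] (f : M →+ M) (hf : ∀ x, f (f x) = x)

theorem inc_apply (x : kerP f) : inc f x = (x : M) := rfl
theorem qt_apply (x : kerP f) : qt f x = hPlusMk f x x.2 := rfl
theorem inc_nrm (x : M) : inc f (nrm f hf x) = x + f x := rfl
theorem f_inc (x : kerP f) : f (inc f x) = inc f x := mem_kerP.1 x.2

theorem inc_inj : Function.Injective (inc f) := Subtype.val_injective

theorem qt_surj : Function.Surjective (qt f) := QuotientAddGroup.mk'_surjective _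

theorem hPlusMk_eq_zero (x : M) (hx : x ∈ kerP f) : hPlusMk f x hx = 0 ↔ ∃ y, y + f y = x := by
  unfold hPlusMk
  rw [QuotientAddGroup.eq_zero_iff, AddSubgroup.mem_addSubgroupOf, mem_imP]

theorem hPlusMk_add (x y : M) (hx : x ∈ kerP f) (hy : y ∈ kerP f) (h : x + y ∈ kerP f) :
    hPlusMk f (x + y) h = hPlusMk f x hx + hPlusMk f y hy := rfl

theorem exact_nrm_qt : Function.Exact (nrm f hf) (qt f) := by
  intro x
  rw [qt_apply, hPlusMk_eq_zero]
  constructor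
  · rintro ⟨y, hy⟩
    exact ⟨y, Subtype.ext hy⟩
  · rintro ⟨y, hy⟩
    exact ⟨y, by rw [← hy]; rfl⟩

theorem exact_inc : Function.Exact (inc f) ((LinearMap.id : M →ₗ[ℤ] M) - f.toIntLinearMap) := by
  intro x
  constructor
  · intro h
    refine ⟨⟨x, mem_kerP.2 ?_⟩, rfl⟩
    have : x - f x = 0 := h
    exact (sub_eq_zero.1 this).symm
  · rintro ⟨y, rfl⟩
    have := f_inc f y
    simp [this]
end

theorem split_two {X Y : Type*} [AddCommGroup X] [AddCommGroup Y] (H : Type*) [AddCommGroup H]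
    (f : X →ₗ[ℤ] Y) (hf : Function.Injective f) (hY : ∀ y : Y, 2 • y = 0) :
    Function.Injective (f.rTensor H) := by
  have hX : ∀ x : X, 2 • x = 0 := fun x => hf (by rw [map_nsmul, hY, map_zero])
  let _ : Module (ZMod 2) X := AddCommGroup.zmodModule hX
  let _ : Module (ZMod 2) Y := AddCommGroup.zmodModule hY
  have : Fact (Nat.Prime 2) := ⟨Nat.prime_two⟩
  obtain ⟨g, hg⟩ := LinearMap.exists_leftInverse_of_injective
    (AddMonoidHom.toZModLinearMap 2 f.toAddMonoidHom) (LinearMap.ker_eq_bot.2 hf)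
  let g' : Y →ₗ[ℤ] X := g.toAddMonoidHom.toIntLinearMap
  have h1 : g' ∘ₗ f = LinearMap.id := by
    ext x
    exact LinearMap.congr_fun hg x
  have h2 : g'.rTensor H ∘ₗ f.rTensor H = LinearMap.id := by
    rw [← LinearMap.rTensor_comp, h1, LinearMap.rTensor_id]
  exact Function.LeftInverse.injective (g := g'.rTensor H) (fun x => LinearMap.congr_fun h2 x)

theorem ker_split {X Y Z : Type*} [AddCommGroup X] [AddCommGroup Y] [AddCommGroup Z]
    (H : Type*) [AddCommGroup H]
    (f : X →ₗ[ℤ] Y) (g : Y →ₗ[ℤ] Z) (hfg : Function.Exact f g) (hZ : ∀ y : Z, 2 • y = 0) :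
    Function.Exact (f.rTensor H) (g.rTensor H) := by
  have h1 : Function.Exact f g.rangeRestrict := by
    intro x
    rw [← hfg x]
    exact Subtype.ext_iff
  have h2 := rTensor_exact H h1 g.surjective_rangeRestrict
  have h3 : g = (LinearMap.range g).subtype ∘ₗ g.rangeRestrict := rfl
  have h4 := split_two H (LinearMap.range g).subtype Subtype.val_injective hZ
  intro x
  rw [← h2 x, h3, LinearMap.rTensor_comp, LinearMap.comp_apply, map_eq_zero_iff _ h4]
  rfl

section
variable (X : Type*) [AddCommGroup X] {N : Type*} [AddCommGroup N]
  (g : N →+ N)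

theorem F0 [Module.Flat ℤ X] : Function.Injective (lTensor X (inc g)) :=
  Module.Flat.lTensor_preserves_injective_linearMap _ (inc_inj g)

theorem F1 [Module.Flat ℤ X] (x : X ⊗[ℤ] N) (hx : lTensor X g.toIntLinearMap x = x) :
    ∃ y, lTensor X (inc g) y = x := by
  have h := Module.Flat.lTensor_exact (M := X) (exact_inc g)
  refine (h x).1 ?_
  rw [LinearMap.lTensor_sub, LinearMap.sub_apply, hx, LinearMap.lTensor_id, LinearMap.id_apply,
    sub_self]

theorem lT_nrm (hg : ∀ x, g (g x) = x) (y : X ⊗[ℤ] N) :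
    lTensor X (inc g) (lTensor X (nrm g hg) y) = y + lTensor X g.toIntLinearMap y := by
  induction y with
  | zero => simp
  | tmul a b => simp [inc_nrm, TensorProduct.tmul_add]
  | add a b ha hb => simp only [map_add, ha, hb]; abel

theorem F2 [Module.Flat ℤ X] (hg : ∀ x, g (g x) = x) (x : X ⊗[ℤ] kerP g) (y : X ⊗[ℤ] N)
    (h : lTensor X (inc g) x = y + lTensor X g.toIntLinearMap y) :
    lTensor X (qt g) x = 0 := by
  rw [← lT_nrm X g hg] at h
  rw [F0 X g h]
  exact (lTensor_exact X (exact_nrm_qt g hg) (qt_surj g)).apply_apply_eq_zero y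

theorem F3 (hg : ∀ x, g (g x) = x) (x : X ⊗[ℤ] kerP g) (h : lTensor X (qt g) x = 0) :
    ∃ y, lTensor X (inc g) x = y + lTensor X g.toIntLinearMap y := by
  obtain ⟨y, rfl⟩ := ((lTensor_exact X (exact_nrm_qt g hg) (qt_surj g)) x).1 h
  exact ⟨y, lT_nrm X g hg y⟩
end

theorem lr_comm {X Y Z W : Type*} [AddCommGroup X] [AddCommGroup Y] [AddCommGroup Z]
    [AddCommGroup W] (f : X →ₗ[ℤ] Y) (g : Z →ₗ[ℤ] W) (x : X ⊗[ℤ] Z) :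
    lTensor Y g (rTensor Z f x) = rTensor W f (lTensor X g x) := by
  rw [← LinearMap.comp_apply, ← LinearMap.comp_apply, LinearMap.lTensor_comp_rTensor,
    LinearMap.rTensor_comp_lTensor]

theorem map_lr {X Y Z W : Type*} [AddCommGroup X] [AddCommGroup Y] [AddCommGroup Z]
    [AddCommGroup W] (f : X →ₗ[ℤ] Y) (g : Z →ₗ[ℤ] W) (x : X ⊗[ℤ] Z) :
    TensorProduct.map f g x = rTensor W f (lTensor X g x) := by
  rw [← LinearMap.comp_apply, LinearMap.rTensor_comp_lTensor]

theorem lT_neg (X : Type*) [AddCommGroup X] {N : Type*} [AddCommGroup N] (g : N →+ N)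
    (x : X ⊗[ℤ] N) : lTensor X (-g).toIntLinearMap x = - lTensor X g.toIntLinearMap x := by
  rw [← LinearMap.neg_apply, ← LinearMap.lTensor_neg]; rfl

section
variable {M N : Type*} [AddCommGroup M] [AddCommGroup N] (f : M →+ M) (g : N →+ N)

theorem tI (x : M ⊗[ℤ] N) : tensorInv f g x =
    rTensor N f.toIntLinearMap (lTensor M g.toIntLinearMap x) := map_lr _ _ x

theorem map_mem (w : kerP f ⊗[ℤ] kerP g) :
    TensorProduct.map (inc f) (inc g) w ∈ kerP (tensorInv f g) := by
  induction w with
  | zero => simp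
  | tmul a b =>
    rw [mem_kerP, TensorProduct.map_tmul]
    change (f _) ⊗ₜ[ℤ] (g _) = _
    rw [f_inc, f_inc]
  | add a b ha hb => rw [map_add]; exact add_mem ha hb

theorem phi_spec (σ : M ⊗[ℤ] N →+ M ⊗[ℤ] N) (hσ : σ = tensorInv f g)
    (φ : TensorProduct ℤ (hPlus f) (hPlus g) →+ hPlus σ)
    (hφ : ∀ (m : M) (hm : m ∈ kerP f) (n : N) (hn : n ∈ kerP g)
        (h : m ⊗ₜ[ℤ] n ∈ kerP σ),
        φ (hPlusMk f m hm ⊗ₜ[ℤ] hPlusMk g n hn) = hPlusMk _ (m ⊗ₜ[ℤ] n) h)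
    (w : kerP f ⊗[ℤ] kerP g) (h : TensorProduct.map (inc f) (inc g) w ∈ kerP σ) :
    φ (TensorProduct.map (qt f) (qt g) w) = hPlusMk σ (TensorProduct.map (inc f) (inc g) w) h := by
  subst hσ
  induction w with
  | zero => rw [map_zero, map_zero]; rfl
  | tmul a b => exact hφ a a.2 b b.2 h
  | add a b ha hb =>
    rw [map_add, map_add, ha (map_mem f g a), hb (map_mem f g b), ← hPlusMk_add]
    · simp only [map_add]
    · exact add_mem (map_mem f g a) (map_mem f g b)

theorem exists_phi (hf : ∀ x, f (f x) = x) (hg : ∀ x, g (g x) = x)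
    (σ : M ⊗[ℤ] N →+ M ⊗[ℤ] N) (hσ : σ = tensorInv f g) :
    ∃ φ : TensorProduct ℤ (hPlus f) (hPlus g) →+ hPlus σ,
      ∀ (m : M) (hm : m ∈ kerP f) (n : N) (hn : n ∈ kerP g)
        (h : m ⊗ₜ[ℤ] n ∈ kerP σ),
        φ (hPlusMk f m hm ⊗ₜ[ℤ] hPlusMk g n hn) = hPlusMk _ (m ⊗ₜ[ℤ] n) h := by
  subst hσ
  let Φ0 : kerP f ⊗[ℤ] kerP g →+ kerP (tensorInv f g) :=
    ((TensorProduct.map (inc f) (inc g)).toAddMonoidHom.codRestrict _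
      (map_mem f g))
  let Φ : kerP f ⊗[ℤ] kerP g →+ hPlus (tensorInv f g) :=
    (QuotientAddGroup.mk' ((imP (tensorInv f g)).addSubgroupOf (kerP (tensorInv f g)))).comp Φ0
  let q := TensorProduct.map (qt f) (qt g)
  have hq : Function.Surjective q := TensorProduct.map_surjective (qt_surj f) (qt_surj g)
  have h1 : ∀ y, Φ (lTensor _ (nrm g hg) y) = 0 := by
    intro y
    induction y with
    | zero => simp only [map_zero]
    | tmul a b =>
      refine (hPlusMk_eq_zero _ _ _).2 ⟨inc f a ⊗ₜ b, ?_⟩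
      change inc f a ⊗ₜ b + (f (inc f a)) ⊗ₜ (g b) = inc f a ⊗ₜ[ℤ] (b + g b)
      rw [f_inc, TensorProduct.tmul_add]
    | add a b ha hb => rw [map_add, map_add, ha, hb, add_zero]
  have h2 : ∀ y, Φ (rTensor _ (nrm f hf) y) = 0 := by
    intro y
    induction y with
    | zero => simp only [map_zero]
    | tmul a b =>
      refine (hPlusMk_eq_zero _ _ _).2 ⟨a ⊗ₜ inc g b, ?_⟩
      change a ⊗ₜ inc g b + (f a) ⊗ₜ (g (inc g b)) = (a + f a) ⊗ₜ[ℤ] (inc g b)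
      rw [f_inc, TensorProduct.add_tmul]
    | add a b ha hb => rw [map_add, map_add, ha, hb, add_zero]
  have hk : q.toAddMonoidHom.ker ≤ Φ.ker := by
    intro w hw
    have hw : w ∈ LinearMap.ker q := hw
    rw [TensorProduct.map_ker (exact_nrm_qt f hf) (qt_surj f) (exact_nrm_qt g hg) (qt_surj g)] at hw
    obtain ⟨_, ⟨y, rfl⟩, _, ⟨y', rfl⟩, rfl⟩ := Submodule.mem_sup.1 hw
    rw [AddMonoidHom.mem_ker, map_add, h1, h2, add_zero]
  let φ := AddMonoidHom.liftOfSurjective q.toAddMonoidHom hq ⟨Φ, hk⟩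
  have hφ : ∀ w, φ (q w) = Φ w := fun w =>
    AddMonoidHom.liftOfRightInverse_comp_apply q.toAddMonoidHom _
      (Function.rightInverse_surjInv hq) ⟨Φ, hk⟩ w
  exact ⟨φ, fun m hm n hn h => hφ (⟨m, hm⟩ ⊗ₜ ⟨n, hn⟩)⟩
end

section
variable {M N : Type*} [AddCommGroup M] [AddCommGroup N] (f : M →+ M) (g : N →+ N)

theorem tf_flat [Module.Flat ℤ M] (A : AddSubgroup M) : Module.Flat ℤ A := by
  have : Module.IsTorsionFree ℤ A := by
    refine Function.Injective.moduleIsTorsionFree (A.subtype) Subtype.val_injective ?_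
    intro c x; rfl
  infer_instance

def pp : M →ₗ[ℤ] imP (-f) := (AddMonoidHom.id M + (-f)).rangeRestrict.toIntLinearMap

theorem pp_surj : Function.Surjective (pp f) := AddMonoidHom.rangeRestrict_surjective _

theorem pp_val (x : M) : (pp f x : M) = x - f x := (sub_eq_add_neg _ _).symm

theorem pp_f (hf : ∀ x, f (f x) = x) (x : M) : pp f (f x) = - pp f x := by
  apply Subtype.ext
  rw [AddSubgroup.coe_neg, pp_val, pp_val, hf, neg_sub]

theorem exact_inc_pp : Function.Exact (inc f) (pp f) := by
  intro x
  rw [← exact_inc f x, Subtype.ext_iff, pp_val]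
  rfl

theorem iA_inj [Module.Flat ℤ M] : Function.Injective (rTensor N (inc f)) := by
  have := tf_flat (imP (-f))
  have h := LinearMap.lTensor_injective_of_exact_of_flat (pp f) (pp_surj f) (inc f) (inc_inj f)
    (exact_inc_pp f) N
  exact (LinearMap.lTensor_inj_iff_rTensor_inj N (inc f)).1 h

theorem two_cancel [Module.Flat ℤ M] {x y : M} (h : x + x = y + y) : x = y := by
  have h2 : (2 : ℤ) • x = (2 : ℤ) • y := by rw [two_zsmul, two_zsmul, h]
  exact smul_right_injective M (two_ne_zero : (2 : ℤ) ≠ 0) h2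

/-- the quotient `A / 2 A` -/
abbrev modTwo (A : Type*) [AddCommGroup A] := A ⧸ (nsmulAddMonoidHom 2 : A →+ A).range

def toModTwo (A : Type*) [AddCommGroup A] : A →ₗ[ℤ] modTwo A :=
  (QuotientAddGroup.mk' ((nsmulAddMonoidHom 2 : A →+ A).range)).toIntLinearMap

theorem toModTwo_eq_zero {A : Type*} [AddCommGroup A] (x : A) :
    toModTwo A x = 0 ↔ ∃ y, y + y = x := by
  refine (QuotientAddGroup.eq_zero_iff x).trans ?_
  simp [AddMonoidHom.mem_range, two_nsmul]

theorem modTwo_two {A : Type*} [AddCommGroup A] (x : modTwo A) : 2 • x = 0 := by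
  obtain ⟨y, rfl⟩ := QuotientAddGroup.mk'_surjective _ x
  rw [← map_nsmul]
  exact (toModTwo_eq_zero _).2 ⟨y, (two_nsmul y).symm⟩

theorem surj_aux (hf : ∀ x, f (f x) = x) (H : Type*) [AddCommGroup H] (w : M ⊗[ℤ] H)
    (hw : rTensor H (nrm f hf) w = 0) :
    ∃ (u : kerP (-f) ⊗[ℤ] H) (x : kerP f ⊗[ℤ] H),
      w = rTensor H (inc (-f)) u + rTensor H (inc f) x := by
  let k : (kerP (-f) × kerP f) →ₗ[ℤ] M :=
    ((inc (-f)).toAddMonoidHom.coprod (inc f).toAddMonoidHom).toIntLinearMap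
  have hk : ∀ a b, k (a, b) = inc (-f) a + inc f b := fun a b => rfl
  have hex : Function.Exact k (toModTwo (kerP f) ∘ₗ nrm f hf) := by
    intro m
    rw [LinearMap.comp_apply, toModTwo_eq_zero]
    constructor
    · rintro ⟨b, hb⟩
      have hb' : (b : M) + b = m + f m := congrArg Subtype.val hb
      have hfb : f b = b := f_inc f b
      refine ⟨(⟨m - b, ?_⟩, b), ?_⟩
      · rw [mem_kerP, AddMonoidHom.neg_apply, map_sub, hfb, neg_sub, sub_eq_sub_iff_add_eq_add, hb']
      · rw [hk]; simp [inc_apply]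
    · rintro ⟨⟨a, b⟩, rfl⟩
      refine ⟨b, Subtype.ext ?_⟩
      change (b : M) + b = inc f (nrm f hf _)
      have ha : f a = - a := by
        have := f_inc (-f) a
        rw [AddMonoidHom.neg_apply, neg_eq_iff_eq_neg] at this
        exact this
      have hfb : f b = b := f_inc f b
      rw [inc_nrm, hk, inc_apply, inc_apply, map_add, ha, hfb]
      abel
  have h := ker_split H k _ hex modTwo_two w
  obtain ⟨t, rfl⟩ := h.1 (by rw [LinearMap.rTensor_comp, LinearMap.comp_apply, hw, map_zero])
  clear h hw
  induction t with
  | zero => exact ⟨0, 0, by simp only [map_zero, add_zero]⟩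
  | tmul a b =>
    refine ⟨a.1 ⊗ₜ b, a.2 ⊗ₜ b, ?_⟩
    simp only [LinearMap.rTensor_tmul]
    rw [← TensorProduct.add_tmul]; rfl
  | add a b ha hb =>
    obtain ⟨u, x, h⟩ := ha
    obtain ⟨u', x', h'⟩ := hb
    refine ⟨u + u', x + x', ?_⟩
    rw [map_add, map_add, map_add, h, h']; abel

/-- the map `h⁻(M) → C / 2`, defined through its values -/
theorem inj_aux [Module.Flat ℤ M] (hf : ∀ x, f (f x) = x) (H : Type*) [AddCommGroup H]
    (v : kerP (-f) ⊗[ℤ] H)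
    (hv : rTensor H (pp f) (rTensor H (inc (-f)) v) = 0) :
    rTensor H (qt (-f)) v = 0 := by
  have hf' : ∀ x, (-f) ((-f) x) = x := fun x => by simp [hf]
  let k0 : kerP (-f) →ₗ[ℤ] modTwo (imP (-f)) := toModTwo _ ∘ₗ pp f ∘ₗ inc (-f)
  have hk0 : Function.Exact (nrm (-f) hf') k0 := by
    intro m
    have hm : f m = - m := by
      have := f_inc (-f) m
      rw [AddMonoidHom.neg_apply, neg_eq_iff_eq_neg] at this
      exact this
    have hm2 : (pp f (inc (-f) m) : M) = m + m := by
      rw [pp_val, inc_apply, hm, sub_neg_eq_add]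
    rw [LinearMap.comp_apply, toModTwo_eq_zero]
    constructor
    · rintro ⟨c, hc⟩
      obtain ⟨y, rfl⟩ := pp_surj f c
      refine ⟨y, Subtype.ext (two_cancel ?_)⟩
      have hc' := congrArg Subtype.val hc
      rw [LinearMap.comp_apply, hm2] at hc'
      exact hc'
    · rintro ⟨y, rfl⟩
      refine ⟨pp f y, Subtype.ext ?_⟩
      rw [LinearMap.comp_apply, hm2]
      rfl
  have h := (ker_split H _ _ hk0 modTwo_two v).1 (by
    rw [LinearMap.rTensor_comp, LinearMap.comp_apply, LinearMap.rTensor_comp,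
      LinearMap.comp_apply, hv, map_zero])
  obtain ⟨y, rfl⟩ := h
  exact (rTensor_exact H (exact_nrm_qt (-f) hf') (qt_surj (-f))).apply_apply_eq_zero y
end

section
variable {M N : Type*} [AddCommGroup M] [AddCommGroup N] (f : M →+ M) (g : N →+ N)

theorem rT_nrm (hf : ∀ x, f (f x) = x) (y : M ⊗[ℤ] N) :
    rTensor N (inc f) (rTensor N (nrm f hf) y) = y + rTensor N f.toIntLinearMap y := by
  induction y with
  | zero => simp
  | tmul a b => simp [inc_nrm, TensorProduct.add_tmul]
  | add a b ha hb => simp only [map_add, ha, hb]; abel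

theorem rT_f_inc (x : kerP f ⊗[ℤ] N) :
    rTensor N f.toIntLinearMap (rTensor N (inc f) x) = rTensor N (inc f) x := by
  induction x with
  | zero => simp
  | tmul a b => simp [f_inc]
  | add a b ha hb => simp only [map_add, ha, hb]

theorem rT_invol (hf : ∀ x, f (f x) = x) (x : M ⊗[ℤ] N) :
    rTensor N f.toIntLinearMap (rTensor N f.toIntLinearMap x) = x := by
  induction x with
  | zero => simp
  | tmul a b => simp [hf]
  | add a b ha hb => simp only [map_add, ha, hb]

theorem lT_invol (hg : ∀ x, g (g x) = x) (x : M ⊗[ℤ] N) :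
    lTensor M g.toIntLinearMap (lTensor M g.toIntLinearMap x) = x := by
  induction x with
  | zero => simp
  | tmul a b => simp [hg]
  | add a b ha hb => simp only [map_add, ha, hb]

theorem rT_pp (hf : ∀ x, f (f x) = x) (x : M ⊗[ℤ] N) :
    rTensor N (pp f) (rTensor N f.toIntLinearMap x) = - rTensor N (pp f) x := by
  induction x with
  | zero => simp
  | tmul a b => simp [pp_f f hf, TensorProduct.neg_tmul]
  | add a b ha hb => simp only [map_add, ha, hb, neg_add]

theorem surj_elem [Module.Flat ℤ M] (hf : ∀ x, f (f x) = x) (hg : ∀ x, g (g x) = x)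
    (z : M ⊗[ℤ] N) (hz : tensorInv f g z = z) :
    ∃ (x : kerP f ⊗[ℤ] kerP g) (u : kerP (-f) ⊗[ℤ] kerP (-g)) (d : M ⊗[ℤ] N),
      z = TensorProduct.map (inc f) (inc g) x + TensorProduct.map (inc (-f)) (inc (-g)) u +
        (d + tensorInv f g d) := by
  have hg' : ∀ x, (-g) ((-g) x) = x := fun x => by simp [hg]
  have hC := tf_flat (imP (-f))
  have hA := tf_flat (kerP f)
  set T := rTensor N f.toIntLinearMap with hT
  set S := lTensor M g.toIntLinearMap with hS
  have hσ : ∀ y, tensorInv f g y = T (S y) := tI f g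
  have hST : ∀ y, S (T y) = T (S y) := lr_comm _ _
  have hTT : ∀ y, T (T y) = y := rT_invol f hf
  have hSS : ∀ y, S (S y) = y := lT_invol g hg
  have hTz : T z = S z := by rw [← hTT (S z), ← hσ, hz]
  -- lift of `p z`
  obtain ⟨c, hc⟩ := F1 _ (-g) (rTensor N (pp f) z) (by
    rw [lT_neg, lr_comm, ← hS, ← hTz, rT_pp f hf, neg_neg])
  obtain ⟨z₂, rfl⟩ := LinearMap.rTensor_surjective _ (pp_surj f) c
  set z₁ := lTensor M (inc (-g)) z₂ with hz₁
  rw [lr_comm, ← hz₁] at hc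
  obtain ⟨x, hx⟩ := (rTensor_exact N (exact_inc_pp f) (pp_surj f) (z₁ - z)).1 (by
    rw [map_sub, hc, sub_self])
  have hSi : ∀ y, S (rTensor N (inc f) y) = rTensor N (inc f) (lTensor _ g.toIntLinearMap y) :=
    lr_comm _ _
  have hTi : ∀ y, T (rTensor N (inc f) y) = rTensor N (inc f) y := rT_f_inc f
  have hSz₁ : S z₁ = - z₁ := by
    rw [hz₁]
    have : ∀ y, S (lTensor M (inc (-g)) y) = - lTensor M (inc (-g)) y := by
      intro y
      rw [eq_neg_iff_add_eq_zero, ← neg_eq_iff_add_eq_zero, hS, ← lT_neg]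
      induction y with
      | zero => simp
      | tmul a b =>
        have := f_inc (-g) b
        simp only [LinearMap.lTensor_tmul, AddMonoidHom.coe_toIntLinearMap]
        rw [this]
      | add a b ha hb => simp only [map_add, ha, hb]
    exact this z₂
  have hTz₁ : T z₁ = z₁ - z + S z := by
    have := hTi x
    rw [hx, map_sub, hTz] at this
    rw [← this]; abel
  have h1 : lTensor _ (inc (-g)) (rTensor _ (nrm f hf) z₂) =
      x + lTensor _ (-g).toIntLinearMap x := by
    apply iA_inj f
    rw [lr_comm, ← hz₁, rT_nrm, lT_neg, map_add, map_neg, ← hSi, hx, map_sub, hSz₁, ← hT, hTz₁]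
    abel
  have h2 := F2 _ (-g) hg' _ _ h1
  rw [lr_comm] at h2
  obtain ⟨u₀, x₀, h3⟩ := surj_aux f hf _ _ h2
  obtain ⟨u, rfl⟩ := LinearMap.lTensor_surjective _ (qt_surj (-g)) u₀
  obtain ⟨x₁, rfl⟩ := LinearMap.lTensor_surjective _ (qt_surj (-g)) x₀
  rw [← lr_comm, ← lr_comm, ← map_add, ← sub_eq_zero, ← map_sub] at h3
  obtain ⟨d, hd⟩ := F3 _ (-g) hg' _ h3
  rw [map_sub, map_add, lr_comm, lr_comm, ← hz₁, lT_neg, ← hS, ← map_lr] at hd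
  set U := TensorProduct.map (inc (-f)) (inc (-g)) u with hU
  have hUσ : T (S U) = U := by
    have h := mem_kerP.1 (map_mem (-f) (-g) u)
    have h' : tensorInv (-f) (-g) U = tensorInv f g U := by
      rw [tI, lT_neg, map_neg, hσ, ← hS]
      have : ∀ y : M ⊗[ℤ] N, rTensor N (-f).toIntLinearMap y = - T y := by
        intro y
        rw [← LinearMap.neg_apply, hT, ← LinearMap.rTensor_neg]; rfl
      rw [this, neg_neg]
    rw [← hσ, ← h']; exact h
  have hdd := rT_nrm (N := N) f hf (S d)
  rw [← hT] at hdd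
  set x₂ := lTensor _ (inc (-g)) x₁ - x - rTensor N (nrm f hf) (S d) with hx₂
  have hz2 : z = U + (d + T (S d)) + rTensor N (inc f) x₂ := by
    rw [hx₂, map_sub, map_sub, hdd, hx]
    have : z₁ = d + -S d + (U + rTensor N (inc f) (lTensor _ (inc (-g)) x₁)) := by
      rw [← hd]; abel
    rw [this]; abel
  have hx₂S : lTensor _ g.toIntLinearMap x₂ = x₂ := by
    apply iA_inj f
    have e : rTensor N (inc f) x₂ = z - (U + (d + T (S d))) := by
      nth_rewrite 1 [hz2]; abel
    rw [← hSi, ← hTi x₂, hST, e, map_sub, map_sub, ← hσ z, hz]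
    simp only [map_add, hUσ, hST, hSS, hTT]
    rw [← e, hTi, e]
    abel
  obtain ⟨x₃, hx₃⟩ := F1 _ g x₂ hx₂S
  refine ⟨x₃, u, d, ?_⟩
  rw [map_lr, hx₃, hσ, ← hU]
  nth_rewrite 1 [hz2]
  abel

theorem inj_elem [Module.Flat ℤ M] (hf : ∀ x, f (f x) = x) (hg : ∀ x, g (g x) = x)
    (x : kerP f ⊗[ℤ] kerP g) (u : kerP (-f) ⊗[ℤ] kerP (-g)) (y : M ⊗[ℤ] N)
    (h : TensorProduct.map (inc f) (inc g) x + TensorProduct.map (inc (-f)) (inc (-g)) u =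
        y + tensorInv f g y) : TensorProduct.map (qt (-f)) (qt (-g)) u = 0 := by
  have hg' : ∀ x, (-g) ((-g) x) = x := fun x => by simp [hg]
  have hC := tf_flat (imP (-f))
  have hp := congrArg (rTensor N (pp f)) h
  rw [tI, map_add, map_add, rT_pp f hf, map_lr, map_lr,
    (rTensor_exact N (exact_inc_pp f) (pp_surj f)).apply_apply_eq_zero, zero_add, ← lr_comm,
    ← lr_comm, ← lr_comm, ← lT_neg] at hp
  have h2 := F2 _ (-g) hg' _ _ hp
  rw [lr_comm, lr_comm] at h2
  have h3 := inj_aux f hf _ _ h2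
  rw [map_lr]
  exact h3

theorem inj_elem' [Module.Flat ℤ M] (hf : ∀ x, f (f x) = x) (hg : ∀ x, g (g x) = x)
    (x : kerP f ⊗[ℤ] kerP g) (y : M ⊗[ℤ] N)
    (h : TensorProduct.map (inc f) (inc g) x = y + tensorInv f g y) :
    TensorProduct.map (qt f) (qt g) x = 0 := by
  have hC := tf_flat (imP (-f))
  have hA := tf_flat (kerP f)
  have hp := congrArg (rTensor N (pp f)) h
  rw [tI, map_add, rT_pp f hf, map_lr,
    (rTensor_exact N (exact_inc_pp f) (pp_surj f)).apply_apply_eq_zero, ← lr_comm] at hp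
  obtain ⟨c, hc⟩ := F1 _ g (rTensor N (pp f) y) (by
    rw [← sub_eq_add_neg] at hp
    exact (sub_eq_zero.1 hp.symm).symm)
  obtain ⟨y₂, rfl⟩ := LinearMap.rTensor_surjective _ (pp_surj f) c
  rw [lr_comm] at hc
  set y₁ := lTensor M (inc g) y₂ with hy₁
  obtain ⟨b, hb⟩ := (rTensor_exact N (exact_inc_pp f) (pp_surj f) (y - y₁)).1 (by
    rw [map_sub, hc, sub_self])
  have hSy₁ : lTensor M g.toIntLinearMap y₁ = y₁ := by
    have : ∀ y, lTensor M g.toIntLinearMap (lTensor M (inc g) y) = lTensor M (inc g) y := by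
      intro y
      induction y with
      | zero => simp
      | tmul a b => simp [f_inc]
      | add a b ha hb => simp only [map_add, ha, hb]
    exact this y₂
  have hx : x = rTensor _ (nrm f hf) y₂ + lTensor _ (nrm g hg) b := by
    apply F0 _ g
    apply iA_inj f
    rw [← map_lr, h, map_add, lr_comm, lT_nrm, map_add, map_add, rT_nrm, ← hy₁, tI]
    have e : y = y₁ + rTensor N (inc f) b := by rw [hb]; abel
    rw [e, map_add, map_add, hSy₁, lr_comm, rT_f_inc]
    abel
  rw [hx, map_add, map_lr, ← lr_comm, map_lr,
    (rTensor_exact _ (exact_nrm_qt f hf) (qt_surj f)).apply_apply_eq_zero,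
    (lTensor_exact _ (exact_nrm_qt g hg) (qt_surj g)).apply_apply_eq_zero, map_zero, map_zero,
    add_zero]

theorem tI_comm (y : M ⊗[ℤ] N) :
    TensorProduct.comm ℤ M N (tensorInv f g y) = tensorInv g f (TensorProduct.comm ℤ M N y) :=
  (TensorProduct.map_comm _ _ y).symm

theorem surj_elem_r [Module.Flat ℤ N] (hf : ∀ x, f (f x) = x) (hg : ∀ x, g (g x) = x)
    (z : M ⊗[ℤ] N) (hz : tensorInv f g z = z) :
    ∃ (x : kerP f ⊗[ℤ] kerP g) (u : kerP (-f) ⊗[ℤ] kerP (-g)) (d : M ⊗[ℤ] N),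
      z = TensorProduct.map (inc f) (inc g) x + TensorProduct.map (inc (-f)) (inc (-g)) u +
        (d + tensorInv f g d) := by
  obtain ⟨x, u, d, h⟩ := surj_elem g f hg hf (TensorProduct.comm ℤ M N z)
    (by rw [← tI_comm, hz])
  refine ⟨TensorProduct.comm ℤ _ _ x, TensorProduct.comm ℤ _ _ u, TensorProduct.comm ℤ _ _ d, ?_⟩
  rw [TensorProduct.map_comm, TensorProduct.map_comm, ← tI_comm, ← map_add, ← map_add, ← map_add,
    ← h]
  exact ((TensorProduct.comm ℤ M N).symm_apply_apply z).symm

theorem inj_elem_r [Module.Flat ℤ N] (hf : ∀ x, f (f x) = x) (hg : ∀ x, g (g x) = x)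
    (x : kerP f ⊗[ℤ] kerP g) (u : kerP (-f) ⊗[ℤ] kerP (-g)) (y : M ⊗[ℤ] N)
    (h : TensorProduct.map (inc f) (inc g) x + TensorProduct.map (inc (-f)) (inc (-g)) u =
        y + tensorInv f g y) : TensorProduct.map (qt (-f)) (qt (-g)) u = 0 := by
  have := inj_elem g f hg hf (TensorProduct.comm ℤ _ _ x) (TensorProduct.comm ℤ _ _ u)
    (TensorProduct.comm ℤ _ _ y) (by
      rw [TensorProduct.map_comm, TensorProduct.map_comm, ← tI_comm, ← map_add, ← map_add, h])
  rw [TensorProduct.map_comm] at this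
  exact (TensorProduct.comm ℤ _ _).injective (this.trans (map_zero _).symm)

theorem inj_elem_r' [Module.Flat ℤ N] (hf : ∀ x, f (f x) = x) (hg : ∀ x, g (g x) = x)
    (x : kerP f ⊗[ℤ] kerP g) (y : M ⊗[ℤ] N)
    (h : TensorProduct.map (inc f) (inc g) x = y + tensorInv f g y) :
    TensorProduct.map (qt f) (qt g) x = 0 := by
  have := inj_elem' g f hg hf (TensorProduct.comm ℤ _ _ x)
    (TensorProduct.comm ℤ _ _ y) (by
      rw [TensorProduct.map_comm, ← tI_comm, ← map_add, h])
  rw [TensorProduct.map_comm] at this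
  exact (TensorProduct.comm ℤ _ _).injective (this.trans (map_zero _).symm)

theorem tI_neg_neg : tensorInv (-f) (-g) = tensorInv f g := by
  ext z
  induction z with
  | zero => simp
  | tmul a b =>
    change (-f a) ⊗ₜ[ℤ] (-g b) = f a ⊗ₜ[ℤ] g b
    rw [TensorProduct.neg_tmul, TensorProduct.tmul_neg, neg_neg]
  | add a b ha hb => simp only [map_add, ha, hb]

theorem tI_neg_right : tensorInv f (-g) = -tensorInv f g := by
  ext z
  induction z with
  | zero => simp
  | tmul a b =>
    change (f a) ⊗ₜ[ℤ] (-g b) = -(f a ⊗ₜ[ℤ] g b)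
    rw [TensorProduct.tmul_neg]
  | add a b ha hb => simp only [map_add, ha, hb]

theorem tI_neg_left : tensorInv (-f) g = -tensorInv f g := by
  ext z
  induction z with
  | zero => simp
  | tmul a b =>
    change (-f a) ⊗ₜ[ℤ] (g b) = -(f a ⊗ₜ[ℤ] g b)
    rw [TensorProduct.neg_tmul]
  | add a b ha hb => simp only [map_add, ha, hb]

theorem main_flat (hMN : Module.Flat ℤ M ∨ Module.Flat ℤ N)
    (hf : ∀ x, f (f x) = x) (hg : ∀ x, g (g x) = x)
    (f' : M →+ M) (hf' : f' = -f) (g' : N →+ N) (hg' : g' = -g)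
    (σ : M ⊗[ℤ] N →+ M ⊗[ℤ] N) (hσ : σ = tensorInv f g)
    (φ : TensorProduct ℤ (hPlus f) (hPlus g) →+ hPlus σ)
    (ψ : TensorProduct ℤ (hPlus f') (hPlus g') →+ hPlus σ)
    (hφ : ∀ (m : M) (hm : m ∈ kerP f) (n : N) (hn : n ∈ kerP g)
        (h : m ⊗ₜ[ℤ] n ∈ kerP σ),
        φ (hPlusMk f m hm ⊗ₜ[ℤ] hPlusMk g n hn) = hPlusMk _ (m ⊗ₜ[ℤ] n) h)
    (hψ : ∀ (m : M) (hm : m ∈ kerP f') (n : N) (hn : n ∈ kerP g')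
        (h : m ⊗ₜ[ℤ] n ∈ kerP σ),
        ψ (hPlusMk f' m hm ⊗ₜ[ℤ] hPlusMk g' n hn) = hPlusMk _ (m ⊗ₜ[ℤ] n) h) :
    Function.Bijective (fun q : TensorProduct ℤ (hPlus f) (hPlus g) ×
      TensorProduct ℤ (hPlus f') (hPlus g') => φ q.1 + ψ q.2) := by
  subst hf' hg'
  have hσ' : σ = tensorInv (-f) (-g) := by
    rw [hσ, tI_neg_neg]
  have m1 : ∀ w, TensorProduct.map (inc f) (inc g) w ∈ kerP σ := by
    rw [hσ]; exact map_mem f g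
  have m2 : ∀ w, TensorProduct.map (inc (-f)) (inc (-g)) w ∈ kerP σ := by
    rw [hσ']; exact map_mem (-f) (-g)
  have s1 := fun w => phi_spec f g σ hσ φ hφ w (m1 w)
  have s2 := fun w => phi_spec (-f) (-g) σ hσ' ψ hψ w (m2 w)
  have q1 := TensorProduct.map_surjective (qt_surj f) (qt_surj g)
  have q2 := TensorProduct.map_surjective (qt_surj (-f)) (qt_surj (-g))
  constructor
  · change Function.Injective (φ.coprod ψ)
    rw [injective_iff_map_eq_zero]
    rintro ⟨a, b⟩ hab
    obtain ⟨x, rfl⟩ := q1 a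
    obtain ⟨u, rfl⟩ := q2 b
    rw [AddMonoidHom.coprod_apply] at hab
    have hu : TensorProduct.map (qt (-f)) (qt (-g)) u = 0 := by
      rw [s1, s2, ← hPlusMk_add σ _ _ (m1 x) (m2 u) (add_mem (m1 x) (m2 u)),
        hPlusMk_eq_zero] at hab
      obtain ⟨y, hy⟩ := hab
      rcases hMN with hM | hN
      · exact inj_elem f g hf hg x u y (by rw [← hy, hσ])
      · exact inj_elem_r f g hf hg x u y (by rw [← hy, hσ])
    rw [hu, map_zero, add_zero, s1, hPlusMk_eq_zero] at hab
    obtain ⟨y, hy⟩ := hab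
    have hx : TensorProduct.map (qt f) (qt g) x = 0 := by
      rcases hMN with hM | hN
      · exact inj_elem' f g hf hg x y (by rw [← hy, hσ])
      · exact inj_elem_r' f g hf hg x y (by rw [← hy, hσ])
    rw [hu, hx]
    rfl
  · intro t
    obtain ⟨⟨z, hz⟩, rfl⟩ := qt_surj σ t
    have hz' : tensorInv f g z = z := by rw [← hσ]; exact mem_kerP.1 hz
    obtain ⟨x, u, d, h⟩ := hMN.elim (fun _ => surj_elem f g hf hg z hz')
      (fun _ => surj_elem_r f g hf hg z hz')
    refine ⟨(TensorProduct.map (qt f) (qt g) x, TensorProduct.map (qt (-f)) (qt (-g)) u), ?_⟩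
    change φ _ + ψ _ = hPlusMk σ z hz
    rw [s1, s2, ← hPlusMk_add σ _ _ (m1 x) (m2 u) (add_mem (m1 x) (m2 u)), ← sub_eq_zero]
    change hPlusMk σ (_ - z) (sub_mem (add_mem (m1 x) (m2 u)) hz) = 0
    rw [hPlusMk_eq_zero]
    refine ⟨-d, ?_⟩
    rw [map_neg, hσ]
    nth_rewrite 1 [h]
    abel

end

end

open TensorProduct in
/-- Let `M`, `N` be abelian groups with involutions `⋆`, and equip
`M ⊗_ℤ N` with the involution `(m ⊗ n)⋆ = m⋆ ⊗ n⋆`.  Then `([m],[n]) ↦ [m ⊗ n]` induces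
well-defined homomorphisms `h^ε(M) ⊗ h^{ε'}(N) →+ h^{εε'}(M ⊗ N)` for all four sign
combinations (with `h⁺(−,g) = hPlus g` and `h⁻(−,g) = hPlus (-g)`), and if `M` or `N` is
free as an abelian group the resulting canonical maps
`(h⁺M ⊗ h⁺N) ⊕ (h⁻M ⊗ h⁻N) → h⁺(M ⊗ N)` and `(h⁺M ⊗ h⁻N) ⊕ (h⁻M ⊗ h⁺N) → h⁻(M ⊗ N)`
are isomorphisms. -/
theorem statement4
    {M N : Type*} [AddCommGroup M] [AddCommGroup N]
    (τM : M →+ M) (τN : N →+ N)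
    (hτM : ∀ x, τM (τM x) = x) (hτN : ∀ x, τN (τN x) = x) :
    -- the four well-defined maps on Tate cohomology
    (∃ φ : TensorProduct ℤ (hPlus τM) (hPlus τN) →+ hPlus (tensorInv τM τN),
      ∀ (m : M) (hm : m ∈ kerP τM) (n : N) (hn : n ∈ kerP τN)
        (h : m ⊗ₜ[ℤ] n ∈ kerP (tensorInv τM τN)),
        φ (hPlusMk τM m hm ⊗ₜ[ℤ] hPlusMk τN n hn) = hPlusMk _ (m ⊗ₜ[ℤ] n) h) ∧
    (∃ φ : TensorProduct ℤ (hPlus (-τM)) (hPlus (-τN)) →+ hPlus (tensorInv τM τN),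
      ∀ (m : M) (hm : m ∈ kerP (-τM)) (n : N) (hn : n ∈ kerP (-τN))
        (h : m ⊗ₜ[ℤ] n ∈ kerP (tensorInv τM τN)),
        φ (hPlusMk (-τM) m hm ⊗ₜ[ℤ] hPlusMk (-τN) n hn) = hPlusMk _ (m ⊗ₜ[ℤ] n) h) ∧
    (∃ φ : TensorProduct ℤ (hPlus τM) (hPlus (-τN)) →+ hPlus (-(tensorInv τM τN)),
      ∀ (m : M) (hm : m ∈ kerP τM) (n : N) (hn : n ∈ kerP (-τN))
        (h : m ⊗ₜ[ℤ] n ∈ kerP (-(tensorInv τM τN))),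
        φ (hPlusMk τM m hm ⊗ₜ[ℤ] hPlusMk (-τN) n hn) = hPlusMk _ (m ⊗ₜ[ℤ] n) h) ∧
    (∃ φ : TensorProduct ℤ (hPlus (-τM)) (hPlus τN) →+ hPlus (-(tensorInv τM τN)),
      ∀ (m : M) (hm : m ∈ kerP (-τM)) (n : N) (hn : n ∈ kerP τN)
        (h : m ⊗ₜ[ℤ] n ∈ kerP (-(tensorInv τM τN))),
        φ (hPlusMk (-τM) m hm ⊗ₜ[ℤ] hPlusMk τN n hn) = hPlusMk _ (m ⊗ₜ[ℤ] n) h) ∧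
    -- if `M` or `N` is free, the canonical maps are isomorphisms
    ((Module.Free ℤ M ∨ Module.Free ℤ N) →
      ∀ (φpp : TensorProduct ℤ (hPlus τM) (hPlus τN) →+ hPlus (tensorInv τM τN))
        (φmm : TensorProduct ℤ (hPlus (-τM)) (hPlus (-τN)) →+ hPlus (tensorInv τM τN))
        (φpm : TensorProduct ℤ (hPlus τM) (hPlus (-τN)) →+ hPlus (-(tensorInv τM τN)))
        (φmp : TensorProduct ℤ (hPlus (-τM)) (hPlus τN) →+ hPlus (-(tensorInv τM τN))),
        (∀ (m : M) (hm : m ∈ kerP τM) (n : N) (hn : n ∈ kerP τN)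
          (h : m ⊗ₜ[ℤ] n ∈ kerP (tensorInv τM τN)),
          φpp (hPlusMk τM m hm ⊗ₜ[ℤ] hPlusMk τN n hn) = hPlusMk _ (m ⊗ₜ[ℤ] n) h) →
        (∀ (m : M) (hm : m ∈ kerP (-τM)) (n : N) (hn : n ∈ kerP (-τN))
          (h : m ⊗ₜ[ℤ] n ∈ kerP (tensorInv τM τN)),
          φmm (hPlusMk (-τM) m hm ⊗ₜ[ℤ] hPlusMk (-τN) n hn) = hPlusMk _ (m ⊗ₜ[ℤ] n) h) →
        (∀ (m : M) (hm : m ∈ kerP τM) (n : N) (hn : n ∈ kerP (-τN))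
          (h : m ⊗ₜ[ℤ] n ∈ kerP (-(tensorInv τM τN))),
          φpm (hPlusMk τM m hm ⊗ₜ[ℤ] hPlusMk (-τN) n hn) = hPlusMk _ (m ⊗ₜ[ℤ] n) h) →
        (∀ (m : M) (hm : m ∈ kerP (-τM)) (n : N) (hn : n ∈ kerP τN)
          (h : m ⊗ₜ[ℤ] n ∈ kerP (-(tensorInv τM τN))),
          φmp (hPlusMk (-τM) m hm ⊗ₜ[ℤ] hPlusMk τN n hn) = hPlusMk _ (m ⊗ₜ[ℤ] n) h) →
        Function.Bijective
          (fun q : TensorProduct ℤ (hPlus τM) (hPlus τN) ×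
              TensorProduct ℤ (hPlus (-τM)) (hPlus (-τN)) => φpp q.1 + φmm q.2) ∧
        Function.Bijective
          (fun q : TensorProduct ℤ (hPlus τM) (hPlus (-τN)) ×
              TensorProduct ℤ (hPlus (-τM)) (hPlus τN) => φpm q.1 + φmp q.2)) := by
  have hM' : ∀ x, (-τM) ((-τM) x) = x := fun x => by simp [hτM]
  have hN' : ∀ x, (-τN) ((-τN) x) = x := fun x => by simp [hτN]
  refine ⟨exists_phi τM τN hτM hτN _ rfl, exists_phi (-τM) (-τN) hM' hN' _ (tI_neg_neg τM τN).symm,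
    exists_phi τM (-τN) hτM hN' _ (tI_neg_right τM τN).symm,
    exists_phi (-τM) τN hM' hτN _ (tI_neg_left τM τN).symm, ?_⟩
  intro hfree φpp φmm φpm φmp hpp hmm hpm hmp
  have hflat : Module.Flat ℤ M ∨ Module.Flat ℤ N := by
    rcases hfree with h | h
    · exact Or.inl Module.Flat.of_free
    · exact Or.inr Module.Flat.of_free
  exact ⟨main_flat τM τN hflat hτM hτN (-τM) rfl (-τN) rfl _ rfl φpp φmm hpp hmm,
    main_flat τM (-τN) hflat hτM hN' (-τM) rfl τN (neg_neg τN).symm _ (tI_neg_right τM τN).symm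
      φpm φmp hpm hmp⟩
end

section
/- For every t ∈ ℤ^K, the twisted Tate cohomology h⁺(A, x^t) ⊕ h⁻(A, x^t) of the twisted polynomial ring (A,⋆) is non-zero if and only if the mod-2 reduction t̄ ∈ (ℤ/2)^K lies in the 𝔽₂-linear span of the reductions m̄ʲ (j ∈ J) of the twist vectors of the self-dual generators μ_j. -/
/-! ### The twisted polynomial ring and its duality involution -/

abbrev TwGens (I J : Type) := (I × Bool) ⊕ J
abbrev TwMon (I J K : Type) := (TwGens I J → ℕ) × (K → ℤ)
abbrev TwPolyRing (I J K : Type) := AddMonoidAlgebra ℤ (TwMon I J K)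

variable {I J K : Type}

def twSwap : TwGens I J → TwGens I J
  | Sum.inl (i, b) => Sum.inl (i, !b)
  | Sum.inr j => Sum.inr j

def twTwist [Fintype I] [Fintype J] (c : I → K → ℤ) (m : J → K → ℤ)
    (f : TwGens I J → ℕ) : K → ℤ :=
  fun k => (∑ i : I, ((f (Sum.inl (i, false)) : ℤ) + (f (Sum.inl (i, true)) : ℤ)) * c i k)
    + ∑ j : J, (f (Sum.inr j) : ℤ) * m j k

lemma twTwist_add [Fintype I] [Fintype J] (c : I → K → ℤ) (m : J → K → ℤ)
    (f f' : TwGens I J → ℕ) :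
    twTwist c m (f + f') = twTwist c m f + twTwist c m f' := by
  funext k
  simp only [twTwist, Pi.add_apply, Nat.cast_add, add_mul, Finset.sum_add_distrib]
  ring

lemma twTwist_zero [Fintype I] [Fintype J] (c : I → K → ℤ) (m : J → K → ℤ) :
    twTwist c m (0 : TwGens I J → ℕ) = 0 := by
  funext k
  simp [twTwist]

def twStarMon [Fintype I] [Fintype J] (c : I → K → ℤ) (m : J → K → ℤ) :
    TwMon I J K →+ TwMon I J K where
  toFun := fun fg => (fg.1 ∘ twSwap, -fg.2 + twTwist c m fg.1)
  map_zero' := by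
    refine Prod.ext rfl ?_
    simp [twTwist_zero]
  map_add' := by
    rintro ⟨f, g⟩ ⟨f', g'⟩
    refine Prod.ext rfl ?_
    show -(g + g') + twTwist c m (f + f') = (-g + twTwist c m f) + (-g' + twTwist c m f')
    rw [twTwist_add]
    abel

noncomputable def twStar [Fintype I] [Fintype J] (c : I → K → ℤ) (m : J → K → ℤ) :
    TwPolyRing I J K →+* TwPolyRing I J K :=
  AddMonoidAlgebra.mapDomainRingHom ℤ (twStarMon c m)

noncomputable def twX (t : K → ℤ) : TwPolyRing I J K :=
  AddMonoidAlgebra.single ((0 : TwGens I J → ℕ), t) 1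

noncomputable def twStarT [Fintype I] [Fintype J] (c : I → K → ℤ) (m : J → K → ℤ)
    (t : K → ℤ) : TwPolyRing I J K →+ TwPolyRing I J K :=
  (AddMonoidHom.mulRight (twX t)).comp (twStar c m).toAddMonoidHom

def sgm [Fintype I] [Fintype J] (c : I → K → ℤ) (m : J → K → ℤ) (t : K → ℤ)
    (x : TwMon I J K) : TwMon I J K :=
  (x.1 ∘ twSwap, -x.2 + twTwist c m x.1 + t)

lemma twSwap_twSwap (g : TwGens I J) : twSwap (twSwap g) = g := by
  rcases g with ⟨i, b⟩ | j <;> simp [twSwap]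

lemma twTwist_swap [Fintype I] [Fintype J] (c : I → K → ℤ) (m : J → K → ℤ)
    (f : TwGens I J → ℕ) : twTwist c m (f ∘ twSwap) = twTwist c m f := by
  funext k
  simp [twTwist, twSwap, add_comm]

lemma sgm_sgm [Fintype I] [Fintype J] (c : I → K → ℤ) (m : J → K → ℤ) (t : K → ℤ)
    (x : TwMon I J K) : sgm c m t (sgm c m t x) = x := by
  refine Prod.ext ?_ ?_
  · funext g
    simp [sgm, twSwap_twSwap]
  · simp only [sgm, twTwist_swap]
    abel

lemma twStarT_single [Fintype I] [Fintype J] (c : I → K → ℤ) (m : J → K → ℤ) (t : K → ℤ)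
    (x : TwMon I J K) (r : ℤ) :
    twStarT c m t (AddMonoidAlgebra.single x r) = AddMonoidAlgebra.single (sgm c m t x) r := by
  have : twStarMon c m x + ((0 : TwGens I J → ℕ), t) = sgm c m t x := by
    refine Prod.ext ?_ ?_ <;> simp [twStarMon, sgm]
  rw [← this]
  simp [twStarT, twStar, twX, AddMonoidAlgebra.single_mul_single]

lemma twStarT_coeff [Fintype I] [Fintype J] (c : I → K → ℤ) (m : J → K → ℤ) (t : K → ℤ)
    (a : TwPolyRing I J K) (x : TwMon I J K) :
    (twStarT c m t a).coeff x = a.coeff (sgm c m t x) := by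
  classical
  induction a using AddMonoidAlgebra.induction_linear with
  | zero => simp
  | add f g hf hg => simp [hf, hg]
  | single y r =>
    rw [twStarT_single]
    simp only [AddMonoidAlgebra.coeff_single, Finsupp.single_apply]
    have : sgm c m t y = x ↔ y = sgm c m t x :=
      ⟨fun h => by rw [← h, sgm_sgm], fun h => by rw [h, sgm_sgm]⟩
    simp [this]

lemma fixed_iff [Fintype I] [Fintype J] (c : I → K → ℤ) (m : J → K → ℤ) (t : K → ℤ) :
    (∃ x : TwMon I J K, sgm c m t x = x) ↔
      (fun k => ((t k : ZMod 2))) ∈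
        Submodule.span (ZMod 2) (Set.range fun j : J => fun k => ((m j k : ZMod 2))) := by
  rw [Submodule.mem_span_range_iff_exists_fun]
  constructor
  · rintro ⟨⟨f, g⟩, h⟩
    refine ⟨fun j => (f (Sum.inr j) : ZMod 2), ?_⟩
    have h1 : f ∘ twSwap = f := congrArg Prod.fst h
    have h2 : -g + twTwist c m f + t = g := congrArg Prod.snd h
    funext k
    have h3 := congrFun h2 k
    have h4 : ∀ i, f (Sum.inl (i, true)) = f (Sum.inl (i, false)) := fun i =>
      congrFun h1 (Sum.inl (i, false))
    simp only [Pi.add_apply, Pi.neg_apply, twTwist, h4, ← two_mul] at h3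
    have h5 := congrArg (Int.cast : ℤ → ZMod 2) h3
    have h20 : (2 : ZMod 2) = 0 := rfl
    push_cast at h5
    simp only [h20, zero_mul, Finset.sum_const_zero, zero_add] at h5
    simp only [Finset.sum_apply, Pi.smul_apply, smul_eq_mul]
    have h6 := CharTwo.add_self_eq_zero (t k : ZMod 2)
    have h7 := CharTwo.add_self_eq_zero (g k : ZMod 2)
    linear_combination h5 - h6 + h7
  · rintro ⟨d, hd⟩
    let f : TwGens I J → ℕ := Sum.elim (fun _ => 0) (fun j => (d j).val)
    have hf : ∀ k, ∃ g : ℤ, twTwist c m f k + t k = 2 * g := by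
      intro k
      have := congrFun hd k
      simp only [Finset.sum_apply, Pi.smul_apply, smul_eq_mul] at this
      show (2 : ℤ) ∣ twTwist c m f k + t k
      rw [show (2 : ℤ) = ((2 : ℕ) : ℤ) from rfl, ← ZMod.intCast_zmod_eq_zero_iff_dvd]
      simp only [twTwist, f, Sum.elim_inl, Sum.elim_inr]
      push_cast
      simp only [ZMod.natCast_val, ZMod.cast_id', id_eq, this]
      simp [CharTwo.add_self_eq_zero]
    choose g hg using hf
    refine ⟨(f, g), Prod.ext ?_ ?_⟩
    · funext x
      rcases x with ⟨i, b⟩ | j <;> simp [sgm, twSwap, f]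
    · funext k
      have := hg k
      simp only [sgm, Pi.add_apply, Pi.neg_apply]
      linarith

lemma exists_half {X : Type} (s : X → X) (hs : ∀ x, s (s x) = x) (hf : ∀ x, s x ≠ x) :
    ∃ S : X → Prop, ∀ x, S (s x) ↔ ¬ S x := by
  refine ⟨fun x => WellOrderingRel x (s x), fun x => ?_⟩
  simp only [hs]
  constructor
  · exact fun h h' => asymm h h'
  · intro h
    rcases trichotomous_of WellOrderingRel x (s x) with h' | h' | h'
    · exact absurd h' h
    · exact absurd h'.symm (hf x)
    · exact h'

lemma quot_ne_zero {M : Type*} [AddCommGroup M] (A B : AddSubgroup M) :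
    (∃ z : A ⧸ B.addSubgroupOf A, z ≠ 0) ↔ ∃ a ∈ A, a ∉ B := by
  constructor
  · rintro ⟨z, hz⟩
    induction z using QuotientAddGroup.induction_on with
    | H z =>
      refine ⟨z, z.2, fun h => hz ?_⟩
      rw [QuotientAddGroup.eq_zero_iff]
      exact h
  · rintro ⟨a, ha, hb⟩
    refine ⟨QuotientAddGroup.mk ⟨a, ha⟩, fun h => hb ?_⟩
    rw [QuotientAddGroup.eq_zero_iff] at h
    exact h

theorem statement6 {I J K : Type} [Fintype I] [Fintype J] [Fintype K]
    (c : I → K → ℤ) (m : J → K → ℤ) (t : K → ℤ) :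
    ((∃ z : hPlus (twStarT c m t), z ≠ 0) ∨ (∃ z : hMinus (twStarT c m t), z ≠ 0)) ↔
      (fun k => ((t k : ZMod 2))) ∈
        Submodule.span (ZMod 2) (Set.range fun j : J => fun k => ((m j k : ZMod 2))) := by
  classical
  rw [← fixed_iff c m t, quot_ne_zero, quot_ne_zero]
  constructor
  · intro h
    by_contra! hne
    obtain ⟨S, hS⟩ := exists_half (sgm c m t) (sgm_sgm c m t) hne
    rcases h with ⟨a, ha, hb⟩ | ⟨a, ha, hb⟩
    · apply hb
      have ha' : a - twStarT c m t a = 0 := ha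
      refine ⟨AddMonoidAlgebra.ofCoeff (a.coeff.filter S), ?_⟩
      ext x
      have hx := congrArg (fun b => b.coeff x) (sub_eq_zero.mp ha')
      simp only [twStarT_coeff] at hx
      simp only [AddMonoidHom.add_apply, AddMonoidHom.id_apply, AddMonoidAlgebra.coeff_add,
        Finsupp.add_apply, twStarT_coeff, AddMonoidAlgebra.coeff_ofCoeff, Finsupp.filter_apply, hS]
      by_cases h : S x <;> simp [h, hx]
    · apply hb
      have ha' : a + twStarT c m t a = 0 := ha
      refine ⟨AddMonoidAlgebra.ofCoeff (a.coeff.filter S), ?_⟩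
      ext x
      have hx := congrArg (fun b => b.coeff x) ha'
      simp only [AddMonoidAlgebra.coeff_add, Finsupp.add_apply, twStarT_coeff,
        AddMonoidAlgebra.coeff_zero, Finsupp.zero_apply] at hx
      simp only [AddMonoidHom.sub_apply, AddMonoidHom.id_apply, AddMonoidAlgebra.coeff_sub,
        Finsupp.sub_apply, twStarT_coeff, AddMonoidAlgebra.coeff_ofCoeff, Finsupp.filter_apply, hS]
      by_cases h : S x <;> simp [h] <;> linarith
  · rintro ⟨x, hx⟩
    left
    refine ⟨AddMonoidAlgebra.single x 1, ?_, ?_⟩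
    · show AddMonoidAlgebra.single x 1 - twStarT c m t (AddMonoidAlgebra.single x 1) = 0
      rw [twStarT_single, hx, sub_self]
    · rintro ⟨b, hb⟩
      have h := congrArg (fun b => b.coeff x) hb
      simp only [AddMonoidHom.add_apply, AddMonoidHom.id_apply, AddMonoidAlgebra.coeff_add,
        Finsupp.add_apply, twStarT_coeff, hx, AddMonoidAlgebra.coeff_single,
        Finsupp.single_eq_same] at h
      omega
end

section
/- Let (A,⋆) be a ⋆-ring, l ∈ A^× a unit with l⋆ = l⁻¹, and λ ∈ A such that λ, λ⋆ is a regular sequence on A (i.e. λ is not a zero divisor in A and the image of λ⋆ is not a zero divisor in A/Aλ). Then the ideal 𝔞 := A·λ + A·λ⋆ is stable under the twisted involution ⋆_l, and multiplication by the product λ·λ⋆ induces isomorphisms h⁺(A,⋆_l) → h⁺(𝔞, ⋆_l) and h⁻(A,⋆_l) → h⁻(𝔞, ⋆_l), where 𝔞 carries the involution obtained by restricting ⋆_l. -/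
/-- The `l`-twisted involution `a ↦ a⋆ · l` on a `⋆`-ring `A`. -/
def twistL {A : Type*} [CommRing A] (σ : A →+* A) (l : A) : A →+ A :=
  (AddMonoidHom.mulRight l).comp σ.toAddMonoidHom


theorem build_equiv {M N : Type*} [AddCommGroup M] [AddCommGroup N]
    (K I : AddSubgroup M) (K' I' : AddSubgroup N) (φ : M →+ N)
    (h1 : ∀ x ∈ K, φ x ∈ K') (h2 : ∀ x ∈ I, φ x ∈ I')
    (inj : ∀ x ∈ K, φ x ∈ I' → x ∈ I)
    (surj : ∀ y ∈ K', ∃ x ∈ K, y - φ x ∈ I') :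
    ∃ e : (K ⧸ I.addSubgroupOf K) ≃+ (K' ⧸ I'.addSubgroupOf K'),
      ∀ x (hx : x ∈ K), e (QuotientAddGroup.mk ⟨x, hx⟩) =
        QuotientAddGroup.mk ⟨φ x, h1 x hx⟩ := by
  let ψ : K →+ K' := (φ.comp K.subtype).codRestrict K' (fun x => h1 x x.2)
  let F : (K ⧸ I.addSubgroupOf K) →+ (K' ⧸ I'.addSubgroupOf K') :=
    QuotientAddGroup.map _ _ ψ (by
      intro x hx
      exact h2 _ hx)
  have hF : ∀ x (hx : x ∈ K), F (QuotientAddGroup.mk ⟨x, hx⟩) =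
        QuotientAddGroup.mk ⟨φ x, h1 x hx⟩ := fun x hx => rfl
  refine ⟨AddEquiv.ofBijective F ⟨?_, ?_⟩, hF⟩
  · rw [injective_iff_map_eq_zero]
    intro a
    induction a using QuotientAddGroup.induction_on with
    | H a =>
      obtain ⟨a, ha⟩ := a
      rw [hF, QuotientAddGroup.eq_zero_iff, QuotientAddGroup.eq_zero_iff]
      intro h
      exact inj a ha h
  · intro b
    induction b using QuotientAddGroup.induction_on with
    | H b =>
      obtain ⟨b, hb⟩ := b
      obtain ⟨x, hx, h⟩ := surj b hb
      refine ⟨QuotientAddGroup.mk ⟨x, hx⟩, ?_⟩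
      rw [hF, QuotientAddGroup.eq]
      show -φ x + b ∈ I'
      rwa [neg_add_eq_sub]

theorem core_inj {A : Type*} [CommRing A] (σ : A →+* A) (hσ : ∀ a, σ (σ a) = a)
    (l : A) (hl : σ l * l = 1) (lam : A)
    (hreg1 : ∀ a : A, lam * a = 0 → a = 0)
    (hreg2 : ∀ a : A, σ lam * a ∈ (Ideal.span {lam} : Ideal A) →
      a ∈ (Ideal.span {lam} : Ideal A))
    (a w : A) (hw : w ∈ (Ideal.span {lam, σ lam} : Ideal A))
    (h : w + σ w * l = lam * σ lam * a) : ∃ v, v + σ v * l = a := by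
  have hq : ∀ a : A, σ lam * a = 0 → a = 0 := by
    intro a ha
    have := hreg1 (σ a) (by rw [← hσ lam, ← map_mul, ha, map_zero])
    rw [← hσ a, this, map_zero]
  obtain ⟨x, y, rfl⟩ := Ideal.mem_span_pair.1 hw
  simp only [map_add, map_mul, hσ] at h
  have h1 := hreg2 (σ x * l + y) (Ideal.mem_span_singleton.2
    ⟨σ lam * a - (x + σ y * l), by linear_combination h⟩)
  obtain ⟨v, hv⟩ := Ideal.mem_span_singleton.1 h1
  have hv2 := congrArg σ hv
  simp only [map_add, map_mul, hσ] at hv2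
  refine ⟨v, ?_⟩
  rw [← sub_eq_zero]
  apply hreg1
  apply hq
  linear_combination h - σ lam * hv - lam * l * hv2 + lam * x * hl

theorem core_surj {A : Type*} [CommRing A] (σ : A →+* A) (hσ : ∀ a, σ (σ a) = a)
    (l : A) (hl : σ l * l = 1) (lam : A)
    (hreg1 : ∀ a : A, lam * a = 0 → a = 0)
    (hreg2 : ∀ a : A, σ lam * a ∈ (Ideal.span {lam} : Ideal A) →
      a ∈ (Ideal.span {lam} : Ideal A))
    (z : A) (hz : z ∈ (Ideal.span {lam, σ lam} : Ideal A))
    (h : σ z * l = z) : ∃ c, σ c * l = c ∧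
      ∃ w ∈ (Ideal.span {lam, σ lam} : Ideal A), w + σ w * l = z - lam * σ lam * c := by
  obtain ⟨x, y, rfl⟩ := Ideal.mem_span_pair.1 hz
  simp only [map_add, map_mul, hσ] at h
  have h1 := hreg2 (σ x * l - y) (Ideal.mem_span_singleton.2
    ⟨x - σ y * l, by linear_combination h⟩)
  obtain ⟨c, hc⟩ := Ideal.mem_span_singleton.1 h1
  have hc2 := congrArg σ hc
  simp only [map_sub, map_mul, hσ] at hc2
  have hq : ∀ a : A, σ lam * a = 0 → a = 0 := by
    intro a ha
    have := hreg1 (σ a) (by rw [← hσ lam, ← map_mul, ha, map_zero])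
    rw [← hσ a, this, map_zero]
  have hfix : σ c * l = c := by
    rw [← sub_eq_zero]
    apply hreg1
    apply hq
    linear_combination σ lam * hc - lam * l * hc2 - h + lam * x * hl
  refine ⟨c, hfix, y * σ lam, Ideal.mul_mem_left _ _ (Ideal.subset_span (by simp)), ?_⟩
  simp only [map_mul, hσ]
  linear_combination h - σ lam * hc

/-- Let `(A,⋆)` be a `⋆`-ring, `l ∈ A^×` a unit with `l⋆ = l⁻¹`, and
`λ ∈ A` such that `λ, λ⋆` is a regular sequence on `A`.  Then the ideal `𝔞 = Aλ + Aλ⋆` is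
stable under the twisted involution `⋆_l`, and multiplication by `λ·λ⋆` induces
isomorphisms `h⁺(A,⋆_l) → h⁺(𝔞,⋆_l)` and `h⁻(A,⋆_l) → h⁻(𝔞,⋆_l)`, where `𝔞` carries the
restriction of `⋆_l`. -/
theorem statement13
    {A : Type*} [CommRing A] (σ : A →+* A) (hσ : ∀ a, σ (σ a) = a)
    (l : Aˣ) (hl : σ l = ((l⁻¹ : Aˣ) : A))
    (lam : A)
    (hreg1 : ∀ a : A, lam * a = 0 → a = 0)
    (hreg2 : ∀ a : A, σ lam * a ∈ (Ideal.span {lam} : Ideal A) →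
      a ∈ (Ideal.span {lam} : Ideal A)) :
    (∀ a ∈ (Ideal.span {lam, σ lam} : Ideal A),
        σ a * l ∈ (Ideal.span {lam, σ lam} : Ideal A)) ∧
    ∀ τ : ↥(Ideal.span {lam, σ lam} : Ideal A) →+ ↥(Ideal.span {lam, σ lam} : Ideal A),
      (∀ y : ↥(Ideal.span {lam, σ lam} : Ideal A), ((τ y : A)) = σ (y : A) * l) →
      (∃ e : hPlus (twistL σ (l : A)) ≃+ hPlus τ,
        ∀ (a : A) (ha : a ∈ kerP (twistL σ (l : A)))
          (hmem : lam * σ lam * a ∈ (Ideal.span {lam, σ lam} : Ideal A))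
          (hb : (⟨lam * σ lam * a, hmem⟩ : ↥(Ideal.span {lam, σ lam} : Ideal A)) ∈ kerP τ),
          e (hPlusMk (twistL σ (l : A)) a ha) = hPlusMk τ ⟨lam * σ lam * a, hmem⟩ hb) ∧
      (∃ e : hMinus (twistL σ (l : A)) ≃+ hMinus τ,
        ∀ (a : A) (ha : a ∈ kerM (twistL σ (l : A)))
          (hmem : lam * σ lam * a ∈ (Ideal.span {lam, σ lam} : Ideal A))
          (hb : (⟨lam * σ lam * a, hmem⟩ : ↥(Ideal.span {lam, σ lam} : Ideal A)) ∈ kerM τ),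
          e (hMinusMk (twistL σ (l : A)) a ha) = hMinusMk τ ⟨lam * σ lam * a, hmem⟩ hb) := by
  have hll : σ (l : A) * l = 1 := by rw [hl]; simp
  have hll' : σ (-(l : A)) * (-(l : A)) = 1 := by rw [map_neg, neg_mul_neg, hll]
  refine ⟨?_, ?_⟩
  · intro a ha
    obtain ⟨x, y, rfl⟩ := Ideal.mem_span_pair.1 ha
    refine Ideal.mem_span_pair.2 ⟨σ y * l, σ x * l, ?_⟩
    simp only [map_add, map_mul, hσ]
    ring
  intro τ hτ
  have hm : ∀ a, lam * σ lam * a ∈ (Ideal.span {lam, σ lam} : Ideal A) := fun a => by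
    rw [mul_assoc]
    exact Ideal.mul_mem_right _ _ (Ideal.subset_span (by simp))
  let φ : A →+ ↥(Ideal.span {lam, σ lam} : Ideal A) :=
    { toFun := fun a => ⟨lam * σ lam * a, hm a⟩
      map_zero' := by ext; simp
      map_add' := fun a b => by ext; simp [mul_add] }
  have hφ : ∀ a, ((φ a : ↥(Ideal.span {lam, σ lam} : Ideal A)) : A) = lam * σ lam * a :=
    fun a => rfl
  have kP : ∀ a, a ∈ kerP (twistL σ (l : A)) ↔ σ a * l = a := fun a => by
    show a - σ a * l = 0 ↔ _
    rw [sub_eq_zero, eq_comm]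
  have kM : ∀ a, a ∈ kerM (twistL σ (l : A)) ↔ σ a * -l = a := fun a => by
    simp only [kerM, twistL, AddMonoidHom.mem_ker, AddMonoidHom.add_apply]
    show a + σ a * l = 0 ↔ _
    constructor <;> intro h <;> linear_combination -h
  have iP : ∀ a, a ∈ imP (twistL σ (l : A)) ↔ ∃ v, v + σ v * l = a := fun a => Iff.rfl
  have iM : ∀ a, a ∈ imM (twistL σ (l : A)) ↔ ∃ v, v + σ v * -l = a := fun a => by
    simp only [mul_neg, ← sub_eq_add_neg]
    exact Iff.rfl
  have kP' : ∀ a, a ∈ kerP τ ↔ σ (a : A) * l = a := fun a => by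
    simp only [kerP, AddMonoidHom.mem_ker, AddMonoidHom.sub_apply, AddMonoidHom.id_apply,
      sub_eq_zero, Subtype.ext_iff, hτ]
    exact eq_comm
  have kM' : ∀ a, a ∈ kerM τ ↔ σ (a : A) * -l = a := fun a => by
    simp only [kerM, AddMonoidHom.mem_ker, AddMonoidHom.add_apply, AddMonoidHom.id_apply,
      Subtype.ext_iff, Submodule.coe_add, Submodule.coe_zero, hτ]
    constructor <;> intro h <;> linear_combination -h
  have iP' : ∀ a, a ∈ imP τ ↔
      ∃ w ∈ (Ideal.span {lam, σ lam} : Ideal A), w + σ w * l = a := fun a => by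
    simp only [imP, AddMonoidHom.mem_range, AddMonoidHom.add_apply, AddMonoidHom.id_apply,
      Subtype.ext_iff, Submodule.coe_add, hτ, Subtype.exists, exists_prop]
  have iM' : ∀ a, a ∈ imM τ ↔
      ∃ w ∈ (Ideal.span {lam, σ lam} : Ideal A), w + σ w * -l = a := fun a => by
    simp only [imM, AddMonoidHom.mem_range, AddMonoidHom.sub_apply, AddMonoidHom.id_apply,
      Subtype.ext_iff, Submodule.coe_sub, hτ, Subtype.exists, exists_prop, mul_neg,
      ← sub_eq_add_neg]
  constructor
  · obtain ⟨e, he⟩ := build_equiv (kerP (twistL σ (l : A))) (imP (twistL σ (l : A)))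
      (kerP τ) (imP τ) φ
      (fun x hx => by
        rw [kP] at hx
        rw [kP', hφ]
        simp only [map_mul, hσ]
        linear_combination lam * σ lam * hx)
      (fun x hx => by
        obtain ⟨v, rfl⟩ := (iP _).1 hx
        refine (iP' _).2 ⟨_, hm v, ?_⟩
        rw [hφ]
        simp only [map_mul, hσ]
        ring)
      (fun x hx h => by
        obtain ⟨w, hw, h⟩ := (iP' _).1 h
        exact (iP _).2 (core_inj σ hσ l hll lam hreg1 hreg2 x w hw h))
      (fun y hy => by
        obtain ⟨c, hc, w⟩ := core_surj σ hσ l hll lam hreg1 hreg2 y y.2 ((kP' _).1 hy)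
        exact ⟨c, (kP _).2 hc, (iP' _).2 w⟩)
    exact ⟨e, fun a ha hmem hb => he a ha⟩
  · obtain ⟨e, he⟩ := build_equiv (kerM (twistL σ (l : A))) (imM (twistL σ (l : A)))
      (kerM τ) (imM τ) φ
      (fun x hx => by
        rw [kM] at hx
        rw [kM', hφ]
        simp only [map_mul, hσ]
        linear_combination lam * σ lam * hx)
      (fun x hx => by
        obtain ⟨v, rfl⟩ := (iM _).1 hx
        refine (iM' _).2 ⟨_, hm v, ?_⟩
        rw [hφ]
        simp only [map_mul, hσ]
        ring)
      (fun x hx h => by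
        obtain ⟨w, hw, h⟩ := (iM' _).1 h
        exact (iM _).2 (core_inj σ hσ (-l) hll' lam hreg1 hreg2 x w hw h))
      (fun y hy => by
        obtain ⟨c, hc, w⟩ := core_surj σ hσ (-l) hll' lam hreg1 hreg2 y y.2 ((kM' _).1 hy)
        exact ⟨c, (kM _).2 hc, (iM' _).2 w⟩)
    exact ⟨e, fun a ha hmem hb => he a ha⟩
end
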